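/- Let d ≥ 2, let Σ ⊂ GL_d(ℝ) be a compact subset, and let μ₀ be a Borel probability measure supported in Σ which is quasi-irreducible and satisfies L_1(μ₀) > L_2(μ₀). Then there exist α ∈ (0,1], θ > 1, C > 0 and ε > 0 such that for every Borel probability measure μ supported in Σ with ‖μ − μ₀‖_TV < ε and every n ≥ 1, k_α(μ^{*n}) ≤ C θ^{−n}. -/

import Mathlib

open MeasureTheory Filter
open scoped LinearAlgebra.Projectivization

noncomputable section

abbrev GLd (d : ℕ) := GL (Fin d) ℝ
abbrev Ed (d : ℕ) := EuclideanSpace ℝ (Fin d)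
abbrev Pd (d : ℕ) := ℙ ℝ (Ed d)

variable {d : ℕ}

instance : MeasurableSpace (GLd d) := borel _
instance : BorelSpace (GLd d) := ⟨rfl⟩

instance : TopologicalSpace (Pd d) :=
  (instTopologicalSpaceQuotient : TopologicalSpace (Quotient (projectivizationSetoid ℝ (Ed d))))
instance : MeasurableSpace (Pd d) := borel _
instance : BorelSpace (Pd d) := ⟨rfl⟩

/-- The continuous linear map on Euclidean space induced by `g ∈ GL_d(ℝ)`. -/
def glCLM (g : GLd d) : Ed d →L[ℝ] Ed d :=
  Matrix.toEuclideanCLM (𝕜 := ℝ) (g : Matrix (Fin d) (Fin d) ℝ)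

/-- The operator norm of `g ∈ GL_d(ℝ)`. -/
def gnorm (g : GLd d) : ℝ := ‖glCLM g‖

lemma glCLM_leftInv (g : GLd d) (v : Ed d) : glCLM g⁻¹ (glCLM g v) = v := by
  have h : glCLM (d := d) g⁻¹ * glCLM g = 1 := by
    rw [glCLM, glCLM, ← map_mul]
    norm_cast
    rw [inv_mul_cancel g]
    exact map_one _
  calc glCLM g⁻¹ (glCLM g v) = (glCLM g⁻¹ * glCLM g) v := rfl
    _ = v := by rw [h]; rfl

lemma glLinear_injective (g : GLd d) : Function.Injective (glCLM g).toLinearMap :=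
  Function.LeftInverse.injective (g := (glCLM g⁻¹)) (fun v => glCLM_leftInv g v)

/-- The projective action of `g ∈ GL_d(ℝ)` on `ℙ(ℝ^d)`. -/
def pact (g : GLd d) : Pd d → Pd d :=
  Projectivization.map (glCLM g).toLinearMap (glLinear_injective g)

/-- The projective distance `δ` on `ℙ(ℝ^d)`, computed on representatives. -/
def pdelta (x y : Pd d) : ℝ :=
  Real.sqrt (‖x.rep‖ ^ 2 * ‖y.rep‖ ^ 2 - (inner ℝ x.rep y.rep : ℝ) ^ 2) /
    (‖x.rep‖ * ‖y.rep‖)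

/-- Convolution of two measures on `GL_d(ℝ)`. -/
def mconv (μ ν : Measure (GLd d)) : Measure (GLd d) :=
  (μ.prod ν).map (fun p => p.1 * p.2)

/-- `n`-fold convolution power of a measure on `GL_d(ℝ)`. -/
def mconvN (μ : Measure (GLd d)) : ℕ → Measure (GLd d)
  | 0 => Measure.dirac 1
  | n + 1 => if n = 0 then μ else mconv (mconvN μ n) μ

/-- The top Lyapunov exponent of a (compactly supported) measure on `GL_d(ℝ)`. -/
def L1 (μ : Measure (GLd d)) : ℝ :=
  limUnder atTop (fun n : ℕ => (n : ℝ)⁻¹ * ∫ g, Real.log (gnorm g) ∂(mconvN μ n))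

/-- `N₂ g = s₁(g)s₂(g)`, the product of the two largest singular values. -/
def N2 (g : GLd d) : ℝ :=
  sSup { x | ∃ p q : Ed d, ‖p‖ = 1 ∧ ‖q‖ = 1 ∧ (inner ℝ p q : ℝ) = 0 ∧
    x = Real.sqrt (‖glCLM g p‖ ^ 2 * ‖glCLM g q‖ ^ 2 -
      (inner ℝ (glCLM g p) (glCLM g q) : ℝ) ^ 2) }

/-- `L₁(μ) + L₂(μ)`. -/
def L12 (μ : Measure (GLd d)) : ℝ :=
  limUnder atTop (fun n : ℕ => (n : ℝ)⁻¹ * ∫ g, Real.log (N2 g) ∂(mconvN μ n))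

/-- The second Lyapunov exponent. -/
def L2 (μ : Measure (GLd d)) : ℝ := L12 μ - L1 μ

/-- The top Lyapunov exponent of the restriction of `μ` to an (invariant) subspace `V`. -/
def L1rest (μ : Measure (GLd d)) (V : Submodule ℝ (Ed d)) : ℝ :=
  limUnder atTop (fun n : ℕ => (n : ℝ)⁻¹ *
    ∫ g, Real.log ‖LinearMap.toContinuousLinearMap ((glCLM g).toLinearMap.domRestrict V)‖
      ∂(mconvN μ n))

/-- Quasi-irreducibility of a measure on `GL_d(ℝ)`. -/
def QuasiIrreducible (μ : Measure (GLd d)) : Prop :=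
  ¬ ∃ V : Submodule ℝ (Ed d), V ≠ ⊥ ∧ V ≠ ⊤ ∧
    (∀ᵐ g ∂μ, V.map (glCLM g).toLinearMap = V) ∧ L1rest μ V < L1 μ

/-- Irreducibility of a measure on `GL_d(ℝ)`. -/
def Irred (μ : Measure (GLd d)) : Prop :=
  ¬ ∃ V : Submodule ℝ (Ed d), V ≠ ⊥ ∧ V ≠ ⊤ ∧
    (∀ᵐ g ∂μ, V.map (glCLM g).toLinearMap = V)

/-- The Markov operator associated with a measure on `GL_d(ℝ)`. -/
def Qop (μ : Measure (GLd d)) (φ : Pd d → ℝ) : Pd d → ℝ :=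
  fun v => ∫ g, φ (pact g v) ∂μ

/-- The average `α`-Hölder constant of a measure on `GL_d(ℝ)`. -/
def kalpha (α : ℝ) (μ : Measure (GLd d)) : ℝ :=
  sSup { x | ∃ v₁ v₂ : Pd d, v₁ ≠ v₂ ∧
    x = ∫ g, (pdelta (pact g v₁) (pact g v₂) / pdelta v₁ v₂) ^ α ∂μ }

/-- The `α`-Hölder seminorm of an observable on `ℙ(ℝ^d)`. -/
def valpha (α : ℝ) (φ : Pd d → ℝ) : ℝ :=
  sSup { x | ∃ v₁ v₂ : Pd d, v₁ ≠ v₂ ∧ x = |φ v₁ - φ v₂| / pdelta v₁ v₂ ^ α }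

/-- `φ` is `α`-Hölder: `v_α(φ) < ∞`. -/
def IsHolder (α : ℝ) (φ : Pd d → ℝ) : Prop :=
  BddAbove { x | ∃ v₁ v₂ : Pd d, v₁ ≠ v₂ ∧ x = |φ v₁ - φ v₂| / pdelta v₁ v₂ ^ α }

/-- The total variation distance between two finite measures. -/
def tvDist (μ ν : Measure (GLd d)) [IsFiniteMeasure μ] [IsFiniteMeasure ν] : ℝ :=
  ((μ.toSignedMeasure - ν.toSignedMeasure).totalVariation Set.univ).toReal

/-- A measure is compactly supported. -/
def CompactlySupported (μ : Measure (GLd d)) : Prop :=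
  ∃ K : Set (GLd d), IsCompact K ∧ μ Kᶜ = 0

/-- `S` is the (topological) support of `μ`. -/
def IsSupport (μ : Measure (GLd d)) (S : Set (GLd d)) : Prop :=
  μ Sᶜ = 0 ∧ ∀ x ∈ S, ∀ U : Set (GLd d), IsOpen U → x ∈ U → 0 < μ U

/-- A measure `η` on `ℙ(ℝ^d)` is `μ`-stationary. -/
def Stationary (μ : Measure (GLd d)) (η : Measure (Pd d)) : Prop :=
  ∀ φ : Pd d → ℝ, Continuous φ → (∃ C, ∀ v, |φ v| ≤ C) →
    ∫ v, φ v ∂η = ∫ g, ∫ v, φ (pact g v) ∂η ∂μ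

open scoped ENNReal NNReal Topology

/-!
The logarithm of the factor by which `g` changes the projective distance of `x` and `y` is at most
`log N₂(g) - log (‖g x‖ / ‖x‖) - log (‖g y‖ / ‖y‖)`. If vectors grow in mean at a rate close to
`L₁(μ₀)`, uniformly in direction, then this has mean about `n (L₂(μ₀) - L₁(μ₀)) < 0` under `μ₀^{*n}`
for `n` large. As the logarithm is bounded on the support, its mean being negative makes its
exponential moment of small order `α` smaller than `1`, so `k_α(μ₀^{*n}) < 1` for one `n`. This
persists under small perturbations in total variation, and submultiplicativity of `k_α` turns it
into exponential decay.

For the uniform growth, consider vectors growing at a rate at most `γ < L₁(μ₀)` with positive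
probability. A zero-one argument shows that these probabilities, if not all zero, come arbitrarily
close to `1`, so that some nonzero vector grows slowly almost surely. The almost surely slow vectors
then form a nonzero invariant subspace on which the top exponent is at most `γ`, contradicting
quasi-irreducibility. Hence every vector almost surely outgrows `γ` within finite time and, by
compactness of the sphere, within a uniform time `N` with high probability. A trajectory can lose
growth only at the rare times from which it does not outgrow `γ` within `N` steps.
-/

/-! ### The linear action -/

lemma glCLM_mul_apply (g h : GLd d) (v : Ed d) : glCLM (g * h) v = glCLM g (glCLM h v) := by
  have glCLM_mul : glCLM (g * h) = glCLM g * glCLM h := by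
    rw [glCLM, glCLM, glCLM, ← map_mul]; norm_cast
  rw [glCLM_mul, mul_apply_eq_comp]

lemma glCLM_one : glCLM (1 : GLd d) = 1 := by
  rw [glCLM]; norm_cast; exact map_one _

lemma glCLM_ne_zero (g : GLd d) {v : Ed d} (hv : v ≠ 0) : glCLM g v ≠ 0 :=
  fun h => hv (glLinear_injective g (h.trans (map_zero _).symm))

lemma continuous_glCLM : Continuous (glCLM (d := d)) :=
  (LinearMap.continuous_of_finiteDimensional
    (Matrix.toEuclideanCLM (n := Fin d) (𝕜 := ℝ)).toAlgEquiv.toLinearMap).comp Units.continuous_val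

lemma continuous_glCLM_apply (v : Ed d) : Continuous (fun g : GLd d => glCLM g v) :=
  continuous_glCLM.clm_apply continuous_const

instance : SecondCountableTopology (Matrix (Fin d) (Fin d) ℝ) :=
  inferInstanceAs (SecondCountableTopology (Fin d → Fin d → ℝ))

instance : SecondCountableTopology (Matrix (Fin d) (Fin d) ℝ)ᵐᵒᵖ :=
  MulOpposite.opHomeomorph.symm.isInducing.secondCountableTopology

instance : SecondCountableTopology (GLd d) :=
  Units.isEmbedding_embedProduct.isInducing.secondCountableTopology

lemma gnorm_mul_le (g h : GLd d) : gnorm (g * h) ≤ gnorm g * gnorm h :=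
  ContinuousLinearMap.opNorm_le_bound _ (mul_nonneg (norm_nonneg _) (norm_nonneg _)) fun v => by
    rw [glCLM_mul_apply, mul_assoc]
    exact (glCLM g).le_opNorm_of_le ((glCLM h).le_opNorm v)

/-- The logarithmic growth of the vector `v` under `g`; an additive cocycle over the action. -/
def logGrowth (g : GLd d) (v : Ed d) : ℝ := Real.log ‖glCLM g v‖ - Real.log ‖v‖

lemma logGrowth_mul (g h : GLd d) (v : Ed d) :
    logGrowth (g * h) v = logGrowth g (glCLM h v) + logGrowth h v := by
  simp only [logGrowth, glCLM_mul_apply]; ring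

lemma measurable_logGrowth (v : Ed d) : Measurable fun g : GLd d => logGrowth g v :=
  (continuous_glCLM_apply v).norm.measurable.log.sub_const _

/-! ### Matrices bounded together with their inverses -/

/-- `g` and `g⁻¹` both have operator norm at most `exp c`. -/
def LogNormLE (c : ℝ) (g : GLd d) : Prop := gnorm g ≤ Real.exp c ∧ gnorm g⁻¹ ≤ Real.exp c

namespace LogNormLE

variable {a b c : ℝ} {g h : GLd d}

lemma one : LogNormLE 0 (1 : GLd d) := by
  have : gnorm (1 : GLd d) ≤ 1 := by
    rw [gnorm, glCLM_one]; exact ContinuousLinearMap.norm_id_le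
  constructor <;> simpa using this

lemma inv (hg : LogNormLE c g) : LogNormLE c g⁻¹ := ⟨hg.2, by simpa using hg.1⟩

lemma mul (hg : LogNormLE a g) (hh : LogNormLE b h) : LogNormLE (a + b) (g * h) := by
  have mul_le {a b : ℝ} {g h : GLd d} (hg : gnorm g ≤ Real.exp a) (hh : gnorm h ≤ Real.exp b) :
      gnorm (g * h) ≤ Real.exp (a + b) := by
    rw [Real.exp_add]
    exact (gnorm_mul_le g h).trans (mul_le_mul hg hh (norm_nonneg _) (Real.exp_pos _).le)
  refine ⟨mul_le hg.1 hh.1, ?_⟩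
  rw [mul_inv_rev, add_comm]
  exact mul_le hh.2 hg.2

lemma norm_apply_le (hg : LogNormLE c g) (v : Ed d) : ‖glCLM g v‖ ≤ Real.exp c * ‖v‖ :=
  (glCLM g).le_of_opNorm_le hg.1 v

lemma logGrowth_le (hg : LogNormLE c g) {v : Ed d} (hv : v ≠ 0) : logGrowth g v ≤ c := by
  have h := Real.log_le_log (norm_pos_iff.2 (glCLM_ne_zero g hv)) (hg.norm_apply_le v)
  rw [Real.log_mul (Real.exp_pos _).ne' (norm_ne_zero_iff.2 hv), Real.log_exp] at h
  exact sub_le_iff_le_add.2 h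

lemma abs_logGrowth_le (hg : LogNormLE c g) {v : Ed d} (hv : v ≠ 0) : |logGrowth g v| ≤ c := by
  have h := hg.inv.logGrowth_le (glCLM_ne_zero g hv)
  rw [logGrowth, glCLM_leftInv] at h
  exact abs_le.2 ⟨by rw [logGrowth]; linarith, hg.logGrowth_le hv⟩

end LogNormLE

lemma isClosed_setOf_logNormLE (c : ℝ) : IsClosed {g : GLd d | LogNormLE c g} :=
  (isClosed_le continuous_glCLM.norm continuous_const).inter
    (isClosed_le (continuous_glCLM.norm.comp continuous_inv) continuous_const)

lemma exists_logNormLE_of_isCompact {S : Set (GLd d)} (hS : IsCompact S) :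
    ∃ c : ℝ, 0 < c ∧ ∀ g ∈ S, LogNormLE c g := by
  obtain ⟨a, ha⟩ := hS.bddAbove_image continuous_glCLM.norm.continuousOn
  obtain ⟨b, hb⟩ := hS.bddAbove_image (continuous_glCLM.norm.comp continuous_inv).continuousOn
  have le_exp : max 1 (max a b) ≤ Real.exp (max 1 (max a b)) := by
    linarith [Real.add_one_le_exp (max 1 (max a b))]
  exact ⟨max 1 (max a b), by positivity, fun g hg =>
    ⟨(ha (Set.mem_image_of_mem _ hg)).trans (le_trans (by simp) le_exp),
      (hb (Set.mem_image_of_mem _ hg)).trans (le_trans (by simp) le_exp)⟩⟩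

/-! ### Areas and the two largest singular values -/

section Area

variable {E : Type*} [NormedAddCommGroup E] [InnerProductSpace ℝ E]

/-- The area of the parallelogram spanned by `p` and `q`, i.e. the norm of `p ∧ q`. -/
def area (p q : E) : ℝ := Real.sqrt (‖p‖ ^ 2 * ‖q‖ ^ 2 - (inner ℝ p q : ℝ) ^ 2)

lemma area_nonneg (p q : E) : 0 ≤ area p q := Real.sqrt_nonneg _

lemma area_le_norm_mul_norm (p q : E) : area p q ≤ ‖p‖ * ‖q‖ :=
  Real.sqrt_le_iff.2 ⟨by positivity, by rw [mul_pow]; exact sub_le_self _ (sq_nonneg _)⟩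

lemma area_zero_left (q : E) : area 0 q = 0 := by simp [area]

lemma area_zero_right (p : E) : area p 0 = 0 := by simp [area]

lemma area_eq_norm_mul_norm {p q : E} (h : inner ℝ p q = 0) : area p q = ‖p‖ * ‖q‖ := by
  rw [area, h, zero_pow two_ne_zero, sub_zero, ← mul_pow, Real.sqrt_sq (by positivity)]

lemma area_add_smul (p q : E) (c : ℝ) : area p (q + c • p) = area p q := by
  rw [area, area, norm_add_sq_real, inner_add_right, inner_smul_right, inner_smul_right, norm_smul,
    real_inner_self_eq_norm_sq, real_inner_comm p q, mul_pow, Real.norm_eq_abs, sq_abs]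
  ring_nf

lemma area_smul_smul (p q : E) (a b : ℝ) : area (a • p) (b • q) = |a * b| * area p q := by
  rw [area, area, ← Real.sqrt_sq_eq_abs, ← Real.sqrt_mul (sq_nonneg _), inner_smul_left,
    inner_smul_right, norm_smul, norm_smul, mul_pow, mul_pow, Real.norm_eq_abs, Real.norm_eq_abs,
    sq_abs, sq_abs, RCLike.conj_to_real]
  ring_nf

lemma exists_smul_eq_of_area_eq_zero {p q : E} (hp : p ≠ 0) (hq : q ≠ 0) (h : area p q = 0) :
    ∃ r : ℝ, r ≠ 0 ∧ q = r • p := by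
  refine (norm_inner_eq_norm_iff hp hq).1 (le_antisymm (norm_inner_le_norm p q) ?_)
  rw [area, Real.sqrt_eq_zero', sub_nonpos, ← mul_pow, sq_le_sq, abs_of_nonneg (by positivity)] at h
  exact h

lemma continuous_area : Continuous fun x : E × E => area x.1 x.2 :=
  Real.continuous_sqrt.comp (by fun_prop)

end Area

lemma continuous_area_glCLM (p q : Ed d) :
    Continuous fun g : GLd d => area (glCLM g p) (glCLM g q) :=
  continuous_area.comp ((continuous_glCLM_apply p).prodMk (continuous_glCLM_apply q))

lemma area_le_N2 (g : GLd d) {p q : Ed d} (hp : ‖p‖ = 1) (hq : ‖q‖ = 1) (h : inner ℝ p q = 0) :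
    area (glCLM g p) (glCLM g q) ≤ N2 g := by
  refine le_csSup ⟨gnorm g ^ 2, ?_⟩ ⟨p, q, hp, hq, h, rfl⟩
  rintro _ ⟨p, q, hp, hq, -, rfl⟩
  calc area (glCLM g p) (glCLM g q) ≤ ‖glCLM g p‖ * ‖glCLM g q‖ := area_le_norm_mul_norm _ _
    _ ≤ gnorm g * gnorm g :=
      mul_le_mul ((glCLM g).unit_le_opNorm p hp.le) ((glCLM g).unit_le_opNorm q hq.le)
        (norm_nonneg _) (norm_nonneg _)
    _ = gnorm g ^ 2 := (sq _).symm

lemma N2_le_of_area_le {g : GLd d} {b : ℝ} (hb : 0 ≤ b)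
    (h : ∀ p q : Ed d, ‖p‖ = 1 → ‖q‖ = 1 → inner ℝ p q = 0 →
      area (glCLM g p) (glCLM g q) ≤ b) : N2 g ≤ b :=
  Real.sSup_le (by rintro _ ⟨p, q, hp, hq, h0, rfl⟩; exact h p q hp hq h0) hb

lemma N2_nonneg (g : GLd d) : 0 ≤ N2 g :=
  Real.sSup_nonneg (by rintro _ ⟨p, q, -, -, -, rfl⟩; exact Real.sqrt_nonneg _)

lemma area_glCLM_le_of_inner_eq_zero (g : GLd d) {p q : Ed d} (h : inner ℝ p q = 0) :
    area (glCLM g p) (glCLM g q) ≤ N2 g * (‖p‖ * ‖q‖) := by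
  rcases eq_or_ne p 0 with rfl | hp
  · simp [area_zero_left]
  rcases eq_or_ne q 0 with rfl | hq
  · simp [area_zero_right]
  have hunit := area_le_N2 g (norm_smul_inv_norm (𝕜 := ℝ) hp) (norm_smul_inv_norm (𝕜 := ℝ) hq)
    (by rw [inner_smul_left, inner_smul_right, h, mul_zero, mul_zero])
  have hp' := norm_pos_iff.2 hp
  have hq' := norm_pos_iff.2 hq
  rw [map_smul, map_smul, area_smul_smul, RCLike.ofReal_real_eq_id, id, id,
    abs_of_pos (by positivity), ← mul_inv, inv_mul_le_iff₀ (by positivity)] at hunit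
  linarith

lemma area_glCLM_le (g : GLd d) (p q : Ed d) :
    area (glCLM g p) (glCLM g q) ≤ N2 g * area p q := by
  rcases eq_or_ne p 0 with rfl | hp
  · simp [area_zero_left]
  set c : ℝ := inner ℝ p q / ‖p‖ ^ 2 with hc
  have horth : inner ℝ p (q - c • p) = 0 := by
    have := norm_ne_zero_iff.2 hp
    rw [inner_sub_right, inner_smul_right, real_inner_self_eq_norm_sq, hc]
    field_simp
    ring
  have h := area_glCLM_le_of_inner_eq_zero g horth
  rwa [← area_eq_norm_mul_norm horth, ← area_add_smul p _ c, ← area_add_smul (glCLM g p) _ c,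
    ← map_smul, ← map_add, sub_add_cancel] at h

lemma N2_mul_le (g h : GLd d) : N2 (g * h) ≤ N2 g * N2 h := by
  refine N2_le_of_area_le (mul_nonneg (N2_nonneg g) (N2_nonneg h)) fun p q hp hq h0 => ?_
  rw [glCLM_mul_apply, glCLM_mul_apply]
  exact (area_glCLM_le g _ _).trans
    (mul_le_mul_of_nonneg_left (area_le_N2 h hp hq h0) (N2_nonneg g))

lemma one_le_N2_one [Nontrivial (Fin d)] : 1 ≤ N2 (1 : GLd d) := by
  obtain ⟨i, j, hij⟩ := exists_pair_ne (Fin d)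
  have horth : inner ℝ (EuclideanSpace.single i (1 : ℝ)) (EuclideanSpace.single j 1) = 0 := by
    simp [EuclideanSpace.inner_single_left, hij]
  have h := area_le_N2 (1 : GLd d) (by simp) (by simp) horth
  rwa [glCLM_one, one_apply_eq_self, one_apply_eq_self,
    area_eq_norm_mul_norm horth, PiLp.norm_single, PiLp.norm_single, norm_one, one_mul] at h

lemma one_le_N2_mul_N2_inv [Nontrivial (Fin d)] (g : GLd d) : 1 ≤ N2 g * N2 g⁻¹ :=
  one_le_N2_one.trans (by simpa using N2_mul_le g g⁻¹)

lemma N2_pos [Nontrivial (Fin d)] (g : GLd d) : 0 < N2 g :=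
  pos_of_mul_pos_left (one_pos.trans_le (one_le_N2_mul_N2_inv g)) (N2_nonneg _)

lemma LogNormLE.abs_log_N2_le [Nontrivial (Fin d)] {c : ℝ} {g : GLd d} (hg : LogNormLE c g) :
    |Real.log (N2 g)| ≤ 2 * c := by
  have log_N2_le {g : GLd d} (hg : LogNormLE c g) : Real.log (N2 g) ≤ 2 * c := by
    rw [Real.log_le_iff_le_exp (N2_pos g)]
    refine N2_le_of_area_le (Real.exp_pos _).le fun p q hp hq _ => ?_
    calc area (glCLM g p) (glCLM g q) ≤ ‖glCLM g p‖ * ‖glCLM g q‖ := area_le_norm_mul_norm _ _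
      _ ≤ (Real.exp c * ‖p‖) * (Real.exp c * ‖q‖) := by
        gcongr <;> exact hg.norm_apply_le _
      _ = Real.exp (2 * c) := by rw [hp, hq, mul_one, ← Real.exp_add, two_mul]
  have log_mul := Real.log_nonneg (one_le_N2_mul_N2_inv g)
  rw [Real.log_mul (N2_pos g).ne' (N2_pos _).ne'] at log_mul
  exact abs_le.2 ⟨by linarith [log_N2_le hg.inv], log_N2_le hg⟩

lemma measurable_N2 [Nontrivial (Fin d)] : Measurable (N2 (d := d)) := by
  refine LowerSemicontinuous.measurable fun g y hy => ?_
  have hne := Set.nonempty_iff_ne_empty.2 fun h =>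
    (N2_pos g).ne' ((congrArg sSup h).trans Real.sSup_empty)
  obtain ⟨_, ⟨p, q, hp, hq, h0, rfl⟩, hlt⟩ := exists_lt_of_lt_csSup hne hy
  filter_upwards [(continuous_area_glCLM p q).continuousAt.eventually_const_lt hlt] with g' hg'
  exact hg'.trans_le (area_le_N2 g' hp hq h0)

/-! ### Random walks on monoids -/

section Path

variable {X : Type*}

/-- The path obtained from `ω` by inserting `x` as its first step. -/
def prepend (x : X) (ω : ℕ → X) : ℕ → X
  | 0 => x
  | n + 1 => ω n

/-- The path `ω` with its first step removed. -/
def shift (ω : ℕ → X) : ℕ → X := fun n => ω (n + 1)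

lemma prepend_zero_shift (ω : ℕ → X) : prepend (ω 0) (shift ω) = ω := by
  funext n; cases n <;> rfl

lemma iterate_shift_apply (k : ℕ) (ω : ℕ → X) (n : ℕ) : shift^[k] ω n = ω (n + k) := by
  induction k generalizing ω with
  | zero => rfl
  | succ k ih => rw [Function.iterate_succ_apply, ih]; exact congrArg ω (Nat.add_assoc n k 1)

variable [MeasurableSpace X]

lemma measurable_shift : Measurable (shift (X := X)) :=
  measurable_pi_lambda _ fun n => measurable_pi_apply (n + 1)

lemma measurable_prepend : Measurable fun x : X × (ℕ → X) => prepend x.1 x.2 :=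
  measurable_pi_lambda _ fun
    | 0 => measurable_fst
    | n + 1 => (measurable_pi_apply n).comp measurable_snd

/-- The law of a path with independent steps distributed according to `μ`. -/
def iidMeasure (μ : Measure X) [IsProbabilityMeasure μ] : Measure (ℕ → X) :=
  Measure.infinitePi fun _ => μ

variable (μ : Measure X) [IsProbabilityMeasure μ]

instance : IsProbabilityMeasure (iidMeasure μ) :=
  inferInstanceAs (IsProbabilityMeasure (Measure.infinitePi fun _ => μ))

lemma measurePreserving_shift : MeasurePreserving shift (iidMeasure μ) (iidMeasure μ) :=
  ⟨measurable_shift, Measure.map_infinitePi_infinitePi_of_inj Nat.succ_injective⟩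

lemma indepFun_head_shift :
    ProbabilityTheory.IndepFun (fun ω : ℕ → X => ω 0) shift (iidMeasure μ) := by
  have coord_indep : ProbabilityTheory.iIndepFun (fun i (ω : ℕ → X) => ω i) (iidMeasure μ) :=
    ProbabilityTheory.iIndepFun_infinitePi (X := fun _ x => x) fun _ => measurable_id
  have hsplit := ProbabilityTheory.indep_iSup_of_disjoint
    (fun i => (measurable_pi_apply i).comap_le) coord_indep
    (Set.disjoint_left.2 fun i (hi : i ∈ ({0} : Set ℕ)) (hi' : i ∈ Set.range Nat.succ) => by
      obtain ⟨j, rfl⟩ := hi'; exact Nat.succ_ne_zero j hi)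
  rw [iSup_singleton, iSup_range] at hsplit
  rw [ProbabilityTheory.IndepFun_iff_Indep]
  convert hsplit
  simp only [MeasurableSpace.pi, MeasurableSpace.comap_iSup, MeasurableSpace.comap_comp]
  rfl

lemma measurePreserving_prepend :
    MeasurePreserving (fun x : X × (ℕ → X) => prepend x.1 x.2)
      (μ.prod (iidMeasure μ)) (iidMeasure μ) := by
  refine ⟨measurable_prepend, ?_⟩
  have head_law : (iidMeasure μ).map (fun ω => ω 0) = μ := Measure.infinitePi_map_eval _ 0
  have joint_law := (ProbabilityTheory.indepFun_iff_map_prod_eq_prod_map_map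
    (measurable_pi_apply 0).aemeasurable measurable_shift.aemeasurable).1 (indepFun_head_shift μ)
  rw [head_law, (measurePreserving_shift μ).map_eq] at joint_law
  rw [← joint_law,
    Measure.map_map measurable_prepend ((measurable_pi_apply 0).prodMk measurable_shift)]
  exact (congrArg (Measure.map · _) (funext prepend_zero_shift)).trans Measure.map_id

lemma iidMeasure_apply {E : Set (ℕ → X)} (hE : MeasurableSet E) :
    iidMeasure μ E = ∫⁻ x, iidMeasure μ {ω | prepend x ω ∈ E} ∂μ := by
  rw [← (measurePreserving_prepend μ).measure_preimage hE.nullMeasurableSet,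
    Measure.prod_apply (measurable_prepend hE)]
  rfl

lemma ae_forall_iidMeasure {μ : Measure X} [IsProbabilityMeasure μ] {p : X → Prop}
    (h : ∀ᵐ x ∂μ, p x) : ∀ᵐ ω ∂iidMeasure μ, ∀ n, p (ω n) :=
  ae_all_iff.2 fun n =>
    (measurePreserving_eval_infinitePi (fun _ => μ) n).quasiMeasurePreserving.ae h

end Path

section Walk

variable {M : Type*} [Monoid M]

/-- The position `ω (n - 1) * ⋯ * ω 0` after `n` steps of the left random walk with steps `ω`. -/
def walk : ℕ → (ℕ → M) → M
  | 0, _ => 1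
  | n + 1, ω => walk n (shift ω) * ω 0

lemma walk_add (m n : ℕ) (ω : ℕ → M) : walk (m + n) ω = walk m (shift^[n] ω) * walk n ω := by
  induction n generalizing ω with
  | zero => exact (mul_one _).symm
  | succ n ih =>
    calc walk (m + n) (shift ω) * ω 0 = walk m (shift^[n] (shift ω)) * walk n (shift ω) * ω 0 := by
          rw [ih]
      _ = _ := mul_assoc _ _ _

lemma walk_mem {Γ : Submonoid M} {ω : ℕ → M} (h : ∀ n, ω n ∈ Γ) (n : ℕ) : walk n ω ∈ Γ := by
  induction n generalizing ω with
  | zero => exact Γ.one_mem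
  | succ n ih => exact Γ.mul_mem (ih fun k => h (k + 1)) (h 0)

variable [MeasurableSpace M] [MeasurableMul₂ M]

lemma measurable_walk (n : ℕ) : Measurable (walk (M := M) n) := by
  induction n with
  | zero => exact measurable_const
  | succ n ih => exact (ih.comp measurable_shift).mul (measurable_pi_apply 0)

lemma map_walk_succ (μ : Measure M) [IsProbabilityMeasure μ] (n : ℕ) :
    (iidMeasure μ).map (walk (n + 1)) = ((iidMeasure μ).map (walk n)).mconv μ := by
  have := Measure.isProbabilityMeasure_map (μ := iidMeasure μ)
    (measurable_walk (M := M) n).aemeasurable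
  have walk_pair := (MeasurePreserving.id μ).prod
    (⟨measurable_walk n, rfl⟩ : MeasurePreserving (walk n) (iidMeasure μ) _)
  have measurable_mul_swap : Measurable fun x : M × M => x.2 * x.1 :=
    measurable_mul.comp measurable_swap
  calc (iidMeasure μ).map (walk (n + 1))
      = (μ.prod (iidMeasure μ)).map fun x => walk n x.2 * x.1 := by
        conv_lhs => rw [← (measurePreserving_prepend μ).map_eq]
        exact Measure.map_map (measurable_walk _) measurable_prepend
    _ = (μ.prod ((iidMeasure μ).map (walk n))).map fun x => x.2 * x.1 := by
        rw [← walk_pair.map_eq]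
        exact (Measure.map_map measurable_mul_swap walk_pair.measurable).symm
    _ = ((iidMeasure μ).map (walk n)).mconv μ := by
        rw [← Measure.prod_swap]
        exact Measure.map_map measurable_mul_swap measurable_swap

end Walk

lemma mconvN_zero (μ : Measure (GLd d)) : mconvN μ 0 = Measure.dirac 1 := rfl

lemma mconvN_succ (μ : Measure (GLd d)) [SFinite μ] (n : ℕ) :
    mconvN μ (n + 1) = (mconvN μ n).mconv μ := by
  rcases eq_or_ne n 0 with rfl | hn
  · exact (Measure.dirac_one_mconv μ).symm
  · exact if_neg hn

section Law

variable (μ : Measure (GLd d)) [IsProbabilityMeasure μ]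

lemma mconvN_eq_map_walk (n : ℕ) : mconvN μ n = (iidMeasure μ).map (walk n) := by
  induction n with
  | zero =>
    calc mconvN μ 0 = (iidMeasure μ Set.univ) • Measure.dirac 1 := by
          rw [measure_univ, one_smul, mconvN_zero]
      _ = (iidMeasure μ).map (walk 0) := (Measure.map_const _ _).symm
  | succ n ih => rw [mconvN_succ, map_walk_succ, ih]

instance (n : ℕ) : IsProbabilityMeasure (mconvN μ n) := by
  rw [mconvN_eq_map_walk]
  exact Measure.isProbabilityMeasure_map (measurable_walk n).aemeasurable

lemma mconvN_add (m n : ℕ) : mconvN μ (m + n) = (mconvN μ m).mconv (mconvN μ n) := by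
  induction n with
  | zero => exact (Measure.mconv_dirac_one _).symm
  | succ n ih => rw [← Nat.add_assoc, mconvN_succ, mconvN_succ, ih, Measure.mconv_assoc]

lemma integral_mconvN (n : ℕ) {φ : GLd d → ℝ} (hφ : Measurable φ) :
    ∫ g, φ g ∂mconvN μ n = ∫ ω, φ (walk n ω) ∂iidMeasure μ := by
  rw [mconvN_eq_map_walk,
    integral_map (measurable_walk n).aemeasurable hφ.aestronglyMeasurable]

end Law

namespace LogNormLE

variable {c : ℝ}

lemma walk {ω : ℕ → GLd d} (h : ∀ n, LogNormLE c (ω n)) (n : ℕ) :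
    LogNormLE (n * c) (walk n ω) := by
  induction n generalizing ω with
  | zero => simpa [_root_.walk] using one
  | succ n ih =>
    rw [Nat.cast_succ, add_one_mul]
    exact (ih fun k => h (k + 1)).mul (h 0)

variable {μ : Measure (GLd d)} [IsProbabilityMeasure μ]

lemma ae_walk (h : ∀ᵐ g ∂μ, LogNormLE c g) :
    ∀ᵐ ω ∂iidMeasure μ, ∀ n : ℕ, LogNormLE (n * c) (_root_.walk n ω) :=
  (ae_forall_iidMeasure h).mono fun _ hω => walk hω

lemma ae_mconvN (h : ∀ᵐ g ∂μ, LogNormLE c g) (n : ℕ) :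
    ∀ᵐ g ∂mconvN μ n, LogNormLE (n * c) g := by
  rw [mconvN_eq_map_walk, ae_map_iff (measurable_walk n).aemeasurable
    (isClosed_setOf_logNormLE _).measurableSet]
  exact (ae_walk h).mono fun _ hω => hω n

end LogNormLE

/-! ### Slowly growing vectors -/

/-- The subspace of vectors growing at exponential rate at most `γ` along the path `ω`. -/
def slowVectors (γ : ℝ) (ω : ℕ → GLd d) : Submodule ℝ (Ed d) where
  carrier := {v | (fun n => glCLM (walk n ω) v) =O[atTop] fun n : ℕ => Real.exp (γ * n)}
  add_mem' hv hw := by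
    simp only [Set.mem_ofPred_eq, map_add] at hv hw ⊢
    exact hv.add hw
  zero_mem' := by
    simp only [Set.mem_ofPred_eq, map_zero]
    exact Asymptotics.isBigO_zero _ _
  smul_mem' a v hv := by
    simp only [Set.mem_ofPred_eq, map_smul] at hv ⊢
    exact hv.const_smul_left a

/-- The event that `v` stays below `R * exp (γ * n)` during the first `N` steps. -/
def slowUpTo (γ R : ℝ) (N : ℕ) (v : Ed d) : Set (ℕ → GLd d) :=
  {ω | ∀ n ≤ N, ‖glCLM (walk n ω) v‖ ≤ R * Real.exp (γ * n)}

lemma slowVectors_prepend (γ : ℝ) (g : GLd d) (ω : ℕ → GLd d) :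
    slowVectors γ (prepend g ω) = (slowVectors γ ω).comap (glCLM g).toLinearMap := by
  ext v
  change (fun n => glCLM (walk n (prepend g ω)) v) =O[atTop] _ ↔
    (fun n => glCLM (walk n ω) (glCLM g v)) =O[atTop] fun n : ℕ => Real.exp (γ * n)
  have walk_succ (n : ℕ) :
      glCLM (walk (n + 1) (prepend g ω)) v = glCLM (walk n ω) (glCLM g v) :=
    glCLM_mul_apply (walk n ω) g v
  conv_lhs => rw [← map_add_atTop_eq_nat 1, Asymptotics.isBigO_map]
  simp only [Function.comp_def, walk_succ, Nat.cast_succ, mul_add_one, Real.exp_add,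
    mul_comm _ (Real.exp γ)]
  exact Asymptotics.isBigO_const_mul_right_iff (Real.exp_ne_zero γ)

lemma mem_slowVectors_iff {γ : ℝ} {v : Ed d} {ω : ℕ → GLd d} :
    v ∈ slowVectors γ ω ↔ ∃ R : ℕ, ∀ N, ω ∈ slowUpTo γ R N v := by
  constructor
  · intro hv
    obtain ⟨R, -, hR⟩ := Asymptotics.bound_of_isBigO_nat_atTop hv
    refine ⟨⌈R⌉₊, fun N n _ => (hR (Real.exp_ne_zero _)).trans ?_⟩
    rw [Real.norm_of_nonneg (Real.exp_pos _).le]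
    gcongr
    exact Nat.le_ceil R
  · rintro ⟨R, hR⟩
    refine Asymptotics.IsBigO.of_bound R (.of_forall fun n => ?_)
    rw [Real.norm_of_nonneg (Real.exp_pos _).le]
    exact hR n n le_rfl

lemma setOf_mem_slowVectors (γ : ℝ) (v : Ed d) :
    {ω | v ∈ slowVectors γ ω} = ⋃ R : ℕ, ⋂ N, slowUpTo γ R N v := by
  ext ω
  simp only [Set.mem_ofPred_eq, mem_slowVectors_iff, Set.mem_iUnion, Set.mem_iInter]

lemma antitone_slowUpTo (γ R : ℝ) (v : Ed d) : Antitone fun N => slowUpTo γ R N v :=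
  fun _ _ hNM _ h n hn => h n (hn.trans hNM)

lemma mem_slowUpTo_zero {γ R : ℝ} {v : Ed d} {ω : ℕ → GLd d} :
    ω ∈ slowUpTo γ R 0 v ↔ ‖v‖ ≤ R := by
  simp [slowUpTo, walk, glCLM_one]

lemma prepend_mem_slowUpTo_succ {γ R : ℝ} {N : ℕ} {v : Ed d} {g : GLd d} {ω : ℕ → GLd d} :
    prepend g ω ∈ slowUpTo γ R (N + 1) v ↔
      ‖v‖ ≤ R ∧ ω ∈ slowUpTo γ (R * Real.exp γ) N (glCLM g v) := by
  have step (n : ℕ) : ‖glCLM (walk (n + 1) (prepend g ω)) v‖ ≤ R * Real.exp (γ * (n + 1 : ℕ)) ↔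
      ‖glCLM (walk n ω) (glCLM g v)‖ ≤ R * Real.exp γ * Real.exp (γ * n) := by
    rw [mul_assoc, ← Real.exp_add, ← glCLM_mul_apply, Nat.cast_succ, mul_add_one, add_comm γ]
    rfl
  rw [← mem_slowUpTo_zero (γ := γ) (ω := prepend g ω)]
  simp only [slowUpTo, Set.mem_ofPred_eq, ← step, ← Nat.lt_succ_iff, Nat.forall_lt_succ_left]
  simp only [Nat.not_lt_zero, IsEmpty.forall_iff, implies_true, and_true]

lemma measurableSet_slowUpTo (γ R : ℝ) (N : ℕ) (v : Ed d) :
    MeasurableSet (slowUpTo γ R N v) := by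
  simp only [slowUpTo, Set.ofPred_forall]
  exact .iInter fun n => .iInter fun _ => measurableSet_le
    ((continuous_glCLM_apply v).norm.measurable.comp (measurable_walk n)) measurable_const

lemma measurableSet_setOf_mem_slowVectors (γ : ℝ) (v : Ed d) :
    MeasurableSet {ω | v ∈ slowVectors γ ω} := by
  rw [setOf_mem_slowVectors]
  exact .iUnion fun R => .iInter fun N => measurableSet_slowUpTo γ R N v

section ZeroOne

variable {μ : Measure (GLd d)} [IsProbabilityMeasure μ] {γ : ℝ} {s : ℝ≥0∞}

lemma measure_mem_slowVectors_inter_slowUpTo_le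
    (hs : ∀ u : Ed d, u ≠ 0 → iidMeasure μ {ω | u ∈ slowVectors γ ω} ≤ s) (N : ℕ) (R : ℝ)
    {v : Ed d} (hv : v ≠ 0) :
    iidMeasure μ ({ω | v ∈ slowVectors γ ω} ∩ slowUpTo γ R N v) ≤
      s * iidMeasure μ (slowUpTo γ R N v) := by
  induction N generalizing R v with
  | zero =>
    by_cases h : ‖v‖ ≤ R <;>
      simp [slowUpTo, walk, glCLM_one, h, hs v hv]
  | succ N ih =>
    have slice_measurable : Measurable fun g =>
        iidMeasure μ {ω | prepend g ω ∈ slowUpTo γ R (N + 1) v} :=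
      measurable_measure_prodMk_left (measurable_prepend (measurableSet_slowUpTo γ R (N + 1) v))
    rw [iidMeasure_apply μ ((measurableSet_setOf_mem_slowVectors γ v).inter
        (measurableSet_slowUpTo γ R (N + 1) v)),
      iidMeasure_apply μ (measurableSet_slowUpTo γ R (N + 1) v),
      ← lintegral_const_mul s slice_measurable]
    refine lintegral_mono fun g => ?_
    simp only [Set.mem_inter_iff, Set.mem_ofPred_eq, slowVectors_prepend, prepend_mem_slowUpTo_succ]
    by_cases h : ‖v‖ ≤ R
    · simp only [h, true_and]
      exact ih _ (glCLM_ne_zero g hv)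
    · simp [h]

lemma one_le_of_measure_mem_slowVectors_ne_zero
    (hs : ∀ u : Ed d, u ≠ 0 → iidMeasure μ {ω | u ∈ slowVectors γ ω} ≤ s) {v : Ed d} (hv : v ≠ 0)
    (hpos : iidMeasure μ {ω | v ∈ slowVectors γ ω} ≠ 0) : 1 ≤ s := by
  obtain ⟨R, hR⟩ : ∃ R : ℕ, iidMeasure μ (⋂ N, slowUpTo γ R N v) ≠ 0 := by
    by_contra! h
    exact hpos (by rw [setOf_mem_slowVectors]; exact measure_iUnion_null h)
  by_contra! hlt
  have tendsto_slowUpTo : Tendsto (fun N => iidMeasure μ (slowUpTo γ R N v)) atTop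
      (𝓝 (iidMeasure μ (⋂ N, slowUpTo γ R N v))) :=
    tendsto_measure_iInter_atTop
      (fun N => (measurableSet_slowUpTo γ R N v).nullMeasurableSet)
      (antitone_slowUpTo γ R v) ⟨0, measure_ne_top _ _⟩
  have le_mul : iidMeasure μ (⋂ N, slowUpTo γ R N v) ≤
      s * iidMeasure μ (⋂ N, slowUpTo γ R N v) := by
    refine ge_of_tendsto' (ENNReal.Tendsto.const_mul tendsto_slowUpTo (.inr hlt.ne_top))
      fun N => (measure_mono fun ω h => ?_).trans
        (measure_mem_slowVectors_inter_slowUpTo_le hs N R hv)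
    exact ⟨mem_slowVectors_iff.2 ⟨R, Set.mem_iInter.1 h⟩, Set.mem_iInter.1 h N⟩
  have mul_lt := ENNReal.mul_lt_mul_left hR (measure_ne_top _ _) hlt
  rw [one_mul] at mul_lt
  exact le_mul.not_gt mul_lt

end ZeroOne

lemma exists_ne_bot_apply_eq_zero {K V : Type*} [DivisionRing K] [AddCommGroup V] [Module K V]
    [FiniteDimensional K V] (c : Submodule K V → ℝ≥0∞)
    (hsup : ∀ W W', c (W ⊔ W') ≤ c W + c W') (hsmall : ∀ ε > 0, ∃ W ≠ ⊥, c W < ε) :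
    ∃ W ≠ ⊥, c W = 0 := by
  by_contra! hpos
  have exists_large (r : ℕ) :
      ∀ ε > 0, ∃ W ≠ ⊥, c W < ε ∧ r ≤ Module.finrank K W := by
    induction r with
    | zero => simpa using hsmall
    | succ r ih =>
      intro ε hε
      have hε2 := ENNReal.half_pos hε.ne'
      obtain ⟨W, hW, hcW, hrW⟩ := ih (ε / 2) hε2
      obtain ⟨W', -, hcW', hrW'⟩ :=
        ih (min (ε / 2) (c W)) (lt_min hε2 (pos_iff_ne_zero.2 (hpos W hW)))
      rw [lt_min_iff] at hcW'
      refine ⟨W ⊔ W', ne_bot_of_le_ne_bot hW le_sup_left, ?_, ?_⟩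
      · exact (hsup W W').trans_lt ((ENNReal.add_lt_add hcW hcW'.1).trans_eq (ENNReal.add_halves ε))
      · by_contra! hlt
        have hW_eq := Submodule.eq_of_le_of_finrank_le (le_sup_left : W ≤ W ⊔ W') (by omega)
        have hW'_eq := Submodule.eq_of_le_of_finrank_le (le_sup_right : W' ≤ W ⊔ W') (by omega)
        exact hcW'.2.ne (congrArg c (hW'_eq.trans hW_eq.symm))
  obtain ⟨W, -, -, hW⟩ := exists_large (Module.finrank K V + 1) 1 one_pos
  exact absurd (Submodule.finrank_le W) (by omega)

/-- The subspace of vectors that almost surely grow at exponential rate at most `γ`. -/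
def slowSubspace (μ : Measure (GLd d)) [IsProbabilityMeasure μ] (γ : ℝ) : Submodule ℝ (Ed d) where
  carrier := {v | ∀ᵐ ω ∂iidMeasure μ, v ∈ slowVectors γ ω}
  add_mem' hv hw := Set.mem_ofPred.2 <| by
    filter_upwards [Set.mem_ofPred.1 hv, Set.mem_ofPred.1 hw] with ω hv hw
      using (slowVectors γ ω).add_mem hv hw
  zero_mem' := Set.mem_ofPred.2 <| .of_forall fun ω => (slowVectors γ ω).zero_mem
  smul_mem' a v hv := Set.mem_ofPred.2 <|
    (Set.mem_ofPred.1 hv).mono fun ω hv => (slowVectors γ ω).smul_mem a hv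

section SlowSubspace

variable {μ : Measure (GLd d)} [IsProbabilityMeasure μ] {γ : ℝ}

lemma ae_slowSubspace_le_slowVectors :
    ∀ᵐ ω ∂iidMeasure μ, slowSubspace μ γ ≤ slowVectors γ ω := by
  obtain ⟨t, ht⟩ := IsNoetherian.noetherian (slowSubspace μ γ)
  have ht_slow : ∀ᵐ ω ∂iidMeasure μ, ∀ v ∈ t, v ∈ slowVectors γ ω :=
    (Finset.eventually_all t).2 fun v hv => ht.le (Submodule.subset_span hv)
  filter_upwards [ht_slow] with ω hω
  rw [← ht]
  exact Submodule.span_le.2 hω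

lemma ae_map_slowSubspace_eq :
    ∀ᵐ g ∂μ, (slowSubspace μ γ).map (glCLM g).toLinearMap = slowSubspace μ γ := by
  have h := Measure.ae_ae_of_ae_prod ((measurePreserving_prepend μ).quasiMeasurePreserving.ae
    (ae_slowSubspace_le_slowVectors (γ := γ)))
  filter_upwards [h] with g hg
  refine Submodule.eq_of_le_of_finrank_eq ?_
    (Submodule.equivMapOfInjective _ (glLinear_injective g) _).finrank_eq.symm
  rintro _ ⟨v, hv, rfl⟩
  filter_upwards [hg] with ω hω
  rw [slowVectors_prepend] at hω
  exact hω hv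

lemma slowSubspace_ne_bot {v : Ed d} (hv : v ≠ 0)
    (hpos : iidMeasure μ {ω | v ∈ slowVectors γ ω} ≠ 0) : slowSubspace μ γ ≠ ⊥ := by
  obtain ⟨W, hW, hW0⟩ := exists_ne_bot_apply_eq_zero
    (fun W => iidMeasure μ {ω | ¬ W ≤ slowVectors γ ω})
    (fun W W' => (measure_mono fun ω (h : ¬ W ⊔ W' ≤ _) =>
      not_and_or.1 (mt sup_le_iff.2 h)).trans (measure_union_le _ _)) fun ε hε => by
    by_contra! hlarge
    refine absurd (one_le_of_measure_mem_slowVectors_ne_zero (s := 1 - ε) (fun u hu => ?_) hv hpos)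
      (not_le.2 (ENNReal.sub_lt_self ENNReal.one_ne_top one_ne_zero hε.ne'))
    have hescape := hlarge (ℝ ∙ u) (Submodule.span_singleton_eq_bot.not.2 hu)
    simp only [Submodule.span_singleton_le_iff_mem] at hescape
    calc iidMeasure μ {ω | u ∈ slowVectors γ ω}
        = 1 - iidMeasure μ {ω | u ∈ slowVectors γ ω}ᶜ := by
          rw [← prob_compl_eq_one_sub (measurableSet_setOf_mem_slowVectors γ u).compl, compl_compl]
      _ ≤ 1 - ε := tsub_le_tsub_left hescape 1
  exact ne_bot_of_le_ne_bot hW fun w hw => (ae_iff.2 hW0).mono fun ω hω => hω hw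

end SlowSubspace

/-! ### Lyapunov exponents as limits -/

section Subadditive

variable {Ω : Type*} [MeasurableSpace Ω] {P : Measure Ω} [IsProbabilityMeasure P]
  {X : ℕ → Ω → ℝ} {C : ℝ}

lemma exists_tendsto_inv_mul_integral {T : Ω → Ω} (hT : MeasurePreserving T P P)
    (hX : ∀ n, AEStronglyMeasurable (X n) P) (hC : ∀ n, ∀ᵐ ω ∂P, ‖X n ω‖ ≤ n * C)
    (hsub : ∀ m n, ∀ᵐ ω ∂P, X (m + n) ω ≤ X m (T^[n] ω) + X n ω) :
    ∃ l, Tendsto (fun n : ℕ => (n : ℝ)⁻¹ * ∫ ω, X n ω ∂P) atTop (𝓝 l) := by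
  have hint (n : ℕ) : Integrable (X n) P := .of_bound (hX n) _ (hC n)
  have hsubadd : Subadditive fun n => ∫ ω, X n ω ∂P := fun m n => by
    have hTn := hT.iterate n
    have hint_comp : Integrable (fun ω => X m (T^[n] ω)) P :=
      hTn.integrable_comp_of_integrable (hint m)
    have integral_comp : ∫ ω, X m (T^[n] ω) ∂P = ∫ ω, X m ω ∂P := by
      conv_rhs => rw [← hTn.map_eq]
      exact (integral_map hTn.aemeasurable (by rw [hTn.map_eq]; exact hX m)).symm
    beta_reduce
    rw [← integral_comp, ← integral_add hint_comp (hint n)]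
    exact integral_mono_ae (hint _) (hint_comp.add (hint n)) (hsub m n)
  have hbdd : BddBelow (Set.range fun n : ℕ => (∫ ω, X n ω ∂P) / n) := by
    refine ⟨-|C|, ?_⟩
    rintro _ ⟨n, rfl⟩
    have norm_le := norm_integral_le_of_norm_le_const (hC n)
    rw [probReal_univ, mul_one, Real.norm_eq_abs] at norm_le
    refine (abs_le.1 ?_).1
    rw [abs_div, Nat.abs_cast]
    refine div_le_of_le_mul₀ n.cast_nonneg (abs_nonneg C) ?_
    rw [mul_comm]
    exact norm_le.trans (mul_le_mul_of_nonneg_left (le_abs_self C) n.cast_nonneg)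
  exact ⟨hsubadd.lim, by simpa only [div_eq_inv_mul] using hsubadd.tendsto_lim hbdd⟩

lemma le_of_tendsto_inv_mul_integral {γ l : ℝ} (hX : ∀ n, AEStronglyMeasurable (X n) P)
    (hC : ∀ n, ∀ᵐ ω ∂P, ‖X n ω‖ ≤ n * C)
    (hlim : Tendsto (fun n : ℕ => (n : ℝ)⁻¹ * ∫ ω, X n ω ∂P) atTop (𝓝 l))
    (hγ : ∀ᵐ ω ∂P, ∃ R, ∀ n : ℕ, X n ω ≤ R + γ * n) : l ≤ γ := by
  have hint (n : ℕ) : Integrable (X n) P := .of_bound (hX n) _ (hC n)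
  set Y : ℕ → Ω → ℝ := fun n ω => max ((n : ℝ)⁻¹ * X n ω) γ
  have hY (n : ℕ) : AEStronglyMeasurable (Y n) P :=
    ((hX n).const_mul _).sup aestronglyMeasurable_const
  have hY_bound (n : ℕ) : ∀ᵐ ω ∂P, ‖Y n ω‖ ≤ max |C| |γ| := by
    filter_upwards [hC n] with ω hω
    refine abs_max_le_max_abs_abs.trans (max_le_max_right _ ?_)
    rw [abs_mul, abs_inv, Nat.abs_cast]
    exact inv_mul_le_of_le_mul₀ n.cast_nonneg (abs_nonneg C)
      (hω.trans (mul_le_mul_of_nonneg_left (le_abs_self C) n.cast_nonneg))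
  have hY_lim : ∀ᵐ ω ∂P, Tendsto (fun n => Y n ω) atTop (𝓝 γ) := by
    filter_upwards [hγ] with ω ⟨R, hR⟩
    have upper : Tendsto (fun n : ℕ => max ((n : ℝ)⁻¹ * R + γ) γ) atTop (𝓝 γ) := by
      have := ((tendsto_inv_atTop_nhds_zero_nat (𝕜 := ℝ)).mul_const R).add_const γ
      simpa only [zero_mul, zero_add, max_self] using this.max (tendsto_const_nhds (x := γ))
    refine tendsto_of_tendsto_of_tendsto_of_le_of_le' tendsto_const_nhds upper
      (.of_forall fun n => le_max_right _ _) ?_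
    filter_upwards [eventually_gt_atTop 0] with n hn
    refine max_le_max_right _ ?_
    rw [inv_mul_le_iff₀ (by positivity), mul_add, mul_inv_cancel_left₀ (by positivity)]
    linarith [hR n]
  have hY_integral :=
    tendsto_integral_of_dominated_convergence _ hY (integrable_const _) hY_bound hY_lim
  rw [integral_const, probReal_univ, one_smul] at hY_integral
  refine le_of_tendsto_of_tendsto' hlim hY_integral fun n => ?_
  rw [← integral_const_mul]
  exact integral_mono ((hint n).const_mul _) (.of_bound (hY n) _ (hY_bound n))
    fun ω => le_max_left _ _

end Subadditive

section Limits

variable {μ : Measure (GLd d)} [IsProbabilityMeasure μ] {c C : ℝ} {Γ : Submonoid (GLd d)}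
  {φ : GLd d → ℝ}

lemma tendsto_inv_mul_integral_mconvN (hμ : ∀ᵐ g ∂μ, LogNormLE c g) (hΓ : ∀ᵐ g ∂μ, g ∈ Γ)
    (hφ : Measurable φ) (hbound : ∀ a g, LogNormLE a g → |φ g| ≤ C * a)
    (hsub : ∀ g ∈ Γ, ∀ h ∈ Γ, φ (g * h) ≤ φ g + φ h) :
    Tendsto (fun n : ℕ => (n : ℝ)⁻¹ * ∫ g, φ g ∂mconvN μ n) atTop
      (𝓝 (limUnder atTop fun n : ℕ => (n : ℝ)⁻¹ * ∫ g, φ g ∂mconvN μ n)) := by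
  refine tendsto_nhds_limUnder ?_
  simp only [integral_mconvN μ _ hφ]
  refine exists_tendsto_inv_mul_integral (measurePreserving_shift μ) (C := C * c)
    (fun n => (hφ.comp (measurable_walk n)).aestronglyMeasurable) (fun n => ?_) fun m n => ?_
  · filter_upwards [LogNormLE.ae_walk hμ] with ω hω
    exact (hbound _ _ (hω n)).trans_eq (mul_left_comm _ _ _)
  · filter_upwards [ae_forall_iidMeasure hΓ] with ω hω
    rw [walk_add]
    exact hsub _ (walk_mem (fun k => by rw [iterate_shift_apply]; exact hω _) m) _ (walk_mem hω n)

lemma tendsto_L12 [Nontrivial (Fin d)] (hμ : ∀ᵐ g ∂μ, LogNormLE c g) :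
    Tendsto (fun n : ℕ => (n : ℝ)⁻¹ * ∫ g, Real.log (N2 g) ∂mconvN μ n) atTop (𝓝 (L12 μ)) := by
  refine tendsto_inv_mul_integral_mconvN (Γ := ⊤) hμ (.of_forall fun _ => Submonoid.mem_top _)
    measurable_N2.log (fun a g hg => hg.abs_log_N2_le) fun g _ h _ => ?_
  rw [← Real.log_mul (N2_pos g).ne' (N2_pos h).ne']
  exact Real.log_le_log (N2_pos _) (N2_mul_le g h)

end Limits

/-- The operator norm of the restriction of `g` to the subspace `V`. -/
def normOn (V : Submodule ℝ (Ed d)) (g : GLd d) : ℝ :=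
  ‖LinearMap.toContinuousLinearMap ((glCLM g).toLinearMap.domRestrict V)‖

section NormOn

variable {V : Submodule ℝ (Ed d)} {g h : GLd d}

lemma normOn_eq_norm_comp (V : Submodule ℝ (Ed d)) (g : GLd d) :
    normOn V g = ‖(glCLM g).comp V.subtypeL‖ := rfl

lemma normOn_top : normOn ⊤ = gnorm (d := d) := by
  funext g
  exact (glCLM g).opNorm_comp_linearIsometryEquiv
    (LinearIsometryEquiv.ofTop (Ed d) ⊤ rfl)

lemma continuous_normOn (V : Submodule ℝ (Ed d)) : Continuous (normOn V) := by
  rw [funext (normOn_eq_norm_comp V)]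
  exact (continuous_glCLM.clm_comp continuous_const).norm

lemma norm_glCLM_le_normOn {v : Ed d} (hv : v ∈ V) : ‖glCLM g v‖ ≤ normOn V g * ‖v‖ :=
  ((glCLM g).comp V.subtypeL).le_opNorm ⟨v, hv⟩

lemma logGrowth_le_log_normOn {v : Ed d} (hv : v ∈ V) (hv0 : v ≠ 0) :
    logGrowth g v ≤ Real.log (normOn V g) := by
  have hgv := norm_pos_iff.2 (glCLM_ne_zero g hv0)
  have hle := norm_glCLM_le_normOn (g := g) hv
  rw [logGrowth, ← Real.log_div hgv.ne' (norm_ne_zero_iff.2 hv0)]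
  exact Real.log_le_log (by positivity) ((div_le_iff₀ (by positivity)).2 hle)

lemma normOn_pos (hV : V ≠ ⊥) (g : GLd d) : 0 < normOn V g := by
  obtain ⟨v, hv, hv0⟩ := V.exists_mem_ne_zero_of_ne_bot hV
  exact pos_of_mul_pos_left
    ((norm_pos_iff.2 (glCLM_ne_zero g hv0)).trans_le (norm_glCLM_le_normOn hv)) (norm_nonneg v)

lemma normOn_mul_le (hh : V ≤ V.comap (glCLM h).toLinearMap) :
    normOn V (g * h) ≤ normOn V g * normOn V h := by
  refine ContinuousLinearMap.opNorm_le_bound _ (by unfold normOn; positivity) fun v => ?_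
  calc ‖glCLM (g * h) v‖ = ‖glCLM g (glCLM h v)‖ := by rw [glCLM_mul_apply]
    _ ≤ normOn V g * ‖glCLM h v‖ := norm_glCLM_le_normOn (hh v.2)
    _ ≤ normOn V g * (normOn V h * ‖v‖) :=
      mul_le_mul_of_nonneg_left (norm_glCLM_le_normOn v.2) (by unfold normOn; positivity)
    _ = normOn V g * normOn V h * ‖v‖ := (mul_assoc _ _ _).symm

lemma LogNormLE.abs_log_normOn_le {c : ℝ} (hg : LogNormLE c g) (hV : V ≠ ⊥) :
    |Real.log (normOn V g)| ≤ c := by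
  obtain ⟨v, hv, hv0⟩ := V.exists_mem_ne_zero_of_ne_bot hV
  have upper : normOn V g ≤ Real.exp c :=
    ContinuousLinearMap.opNorm_le_bound _ (Real.exp_pos c).le fun v => hg.norm_apply_le v
  exact abs_le.2 ⟨(abs_le.1 (hg.abs_logGrowth_le hv0)).1.trans (logGrowth_le_log_normOn hv hv0),
    (Real.log_le_iff_le_exp (normOn_pos hV g)).2 upper⟩

variable {μ : Measure (GLd d)} [IsProbabilityMeasure μ] {c : ℝ}

/-- The submonoid of matrices mapping the subspace `V` into itself. -/
def subspaceStabilizer (V : Submodule ℝ (Ed d)) : Submonoid (GLd d) where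
  carrier := {g | V ≤ V.comap (glCLM g).toLinearMap}
  one_mem' v hv := by
    rwa [Submodule.mem_comap, glCLM_one]
  mul_mem' {g h} hg hh v hv := by
    simpa only [Submodule.mem_comap, ContinuousLinearMap.coe_coe, glCLM_mul_apply] using hg (hh hv)

lemma tendsto_L1rest (hμ : ∀ᵐ g ∂μ, LogNormLE c g) (hV : V ≠ ⊥)
    (hinv : ∀ᵐ g ∂μ, V.map (glCLM g).toLinearMap = V) :
    Tendsto (fun n : ℕ => (n : ℝ)⁻¹ * ∫ g, Real.log (normOn V g) ∂mconvN μ n) atTop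
      (𝓝 (L1rest μ V)) := by
  refine tendsto_inv_mul_integral_mconvN (Γ := subspaceStabilizer V) (C := 1) hμ
    (hinv.mono fun g hg => Submodule.map_le_iff_le_comap.1 hg.le)
    (continuous_normOn V).measurable.log
    (fun a g hg => (hg.abs_log_normOn_le hV).trans_eq (one_mul a).symm) fun g _ h hh => ?_
  rw [← Real.log_mul (normOn_pos hV g).ne' (normOn_pos hV h).ne']
  exact Real.log_le_log (normOn_pos hV _) (normOn_mul_le hh)

end NormOn

/-! ### Quasi-irreducibility excludes slow vectors -/

lemma exists_forall_opNorm_le_of_forall_isBigO {E F : Type*} [NormedAddCommGroup E]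
    [NormedSpace ℝ E] [CompleteSpace E] [NormedAddCommGroup F] [NormedSpace ℝ F]
    {A : ℕ → E →L[ℝ] F} {f : ℕ → ℝ}
    (hf : ∀ n, f n ≠ 0) (h : ∀ v, (fun n => A n v) =O[atTop] f) : ∃ R, ∀ n, ‖A n‖ ≤ R * ‖f n‖ := by
  obtain ⟨R, hR⟩ := banach_steinhaus (g := fun n => (f n)⁻¹ • A n) fun v => by
    obtain ⟨C, -, hC⟩ := Asymptotics.bound_of_isBigO_nat_atTop (h v)
    refine ⟨C, fun n => ?_⟩
    rw [smul_apply, norm_smul, norm_inv, inv_mul_le_iff₀ (norm_pos_iff.2 (hf n)), mul_comm]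
    exact hC (hf n)
  refine ⟨R, fun n => ?_⟩
  have := hR n
  rwa [norm_smul, norm_inv, inv_mul_le_iff₀ (norm_pos_iff.2 (hf n)), mul_comm] at this

section NoSlow

variable {μ : Measure (GLd d)} [IsProbabilityMeasure μ] {c γ : ℝ}

lemma L1rest_slowSubspace_le (hμ : ∀ᵐ g ∂μ, LogNormLE c g) (hV : slowSubspace μ γ ≠ ⊥) :
    L1rest μ (slowSubspace μ γ) ≤ γ := by
  have hlim := tendsto_L1rest hμ hV ae_map_slowSubspace_eq
  have hmeas := (continuous_normOn (slowSubspace μ γ)).measurable.log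
  simp only [integral_mconvN μ _ hmeas] at hlim
  refine le_of_tendsto_inv_mul_integral
    (fun n => (hmeas.comp (measurable_walk n)).aestronglyMeasurable)
    (fun n => (LogNormLE.ae_walk hμ).mono fun ω hω => (hω n).abs_log_normOn_le hV) hlim ?_
  filter_upwards [ae_slowSubspace_le_slowVectors (μ := μ) (γ := γ)] with ω hω
  obtain ⟨R, hR⟩ := exists_forall_opNorm_le_of_forall_isBigO
    (A := fun n => (glCLM (walk n ω)).comp (slowSubspace μ γ).subtypeL)
    (fun n : ℕ => Real.exp_ne_zero (γ * n)) fun v => hω v.2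
  refine ⟨Real.log R, fun n => ?_⟩
  have hle := hR n
  have hpos := normOn_pos hV (walk n ω)
  rw [Real.norm_of_nonneg (Real.exp_pos _).le, ← normOn_eq_norm_comp] at hle
  have hR_pos : 0 < R := pos_of_mul_pos_left (hpos.trans_le hle) (Real.exp_pos _).le
  rw [← Real.log_exp (γ * n), ← Real.log_mul hR_pos.ne' (Real.exp_pos _).ne']
  exact Real.log_le_log hpos hle

lemma measure_mem_slowVectors_eq_zero (hμ : ∀ᵐ g ∂μ, LogNormLE c g) (hqi : QuasiIrreducible μ)
    (hγ : γ < L1 μ) {v : Ed d} (hv : v ≠ 0) : iidMeasure μ {ω | v ∈ slowVectors γ ω} = 0 := by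
  by_contra hpos
  have hV := slowSubspace_ne_bot hv hpos
  have hlt : L1rest μ (slowSubspace μ γ) < L1 μ := (L1rest_slowSubspace_le hμ hV).trans_lt hγ
  refine hqi ⟨slowSubspace μ γ, hV, fun htop => ?_, ae_map_slowSubspace_eq, hlt⟩
  have L1rest_top : L1rest μ ⊤ = L1 μ := by
    rw [L1, ← normOn_top]; rfl
  rw [htop, L1rest_top] at hlt
  exact hlt.false

end NoSlow

/-! ### Uniform growth of the expected logarithm -/

section Stalling

variable {x : ℕ → ℝ} {κ : ℝ} {N : ℕ}

-- A time that does not stall can be skipped: `b` still bounds the window starting one step earlier.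
lemma le_add_mul_card_stalling (hx : ∀ j, |x (j + 1) - x j| ≤ κ) {n : ℕ} {b : ℝ}
    (hb : ∀ i ≤ N, x (n + i) ≤ b) :
    x 0 ≤ b + κ * ((Finset.range n).filter fun j => ∀ i ≤ N, x (j + i) ≤ x j).card := by
  induction n generalizing b with
  | zero => simpa using hb 0 N.zero_le
  | succ n ih =>
    rw [Finset.range_add_one, Finset.filter_insert]
    split_ifs with hstall
    · rw [Finset.card_insert_of_notMem (by simp)]
      push_cast
      have := ih (b := b + κ) fun i hi => by
        linarith [hstall i hi, (abs_le.1 (hx n)).1, hb 0 N.zero_le]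
      linarith
    · push Not at hstall
      obtain ⟨k, hk, hlt⟩ := hstall
      have later (i : ℕ) (hi : i + 1 ≤ N) : x (n + (i + 1)) ≤ b := by
        rw [← Nat.succ_add_eq_add_succ]; exact hb i (i.le_succ.trans hi)
      refine ih fun
        | 0, _ => ?_
        | i + 1, hi => later i hi
      rcases k with - | k
      · exact absurd hlt (lt_irrefl _)
      · exact hlt.le.trans (later k hk)

lemma sub_le_mul_card_stalling (hx : ∀ j, |x (j + 1) - x j| ≤ κ) (N n : ℕ) :
    x 0 - x n ≤ κ * (N + ((Finset.range n).filter fun j => ∀ i ≤ N, x (j + i) ≤ x j).card) := by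
  have : 0 ≤ κ := (abs_nonneg _).trans (hx 0)
  have le_add_mul (i : ℕ) : x (n + i) ≤ x n + κ * i := by
    induction i with
    | zero => simp
    | succ i ih =>
      push_cast
      linarith [(abs_le.1 (hx (n + i))).2, show x (n + (i + 1)) = x (n + i + 1) from rfl]
  have := le_add_mul_card_stalling (N := N) hx fun i hi => (le_add_mul i).trans
    (show x n + κ * i ≤ x n + κ * N by gcongr)
  linarith

end Stalling

/-- The event that the growth of `v` over any of the `N` steps following time `j` is at most
`γ` per step. -/
def stallsAt (γ : ℝ) (N j : ℕ) (v : Ed d) : Set (ℕ → GLd d) :=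
  {ω | ∀ k ≤ N, logGrowth (walk (j + k) ω) v ≤ logGrowth (walk j ω) v + γ * k}

lemma measurableSet_stallsAt (γ : ℝ) (N j : ℕ) (v : Ed d) : MeasurableSet (stallsAt γ N j v) := by
  have hmeas (n : ℕ) : Measurable fun ω => logGrowth (walk n ω) v :=
    (measurable_logGrowth v).comp (measurable_walk n)
  simp only [stallsAt, Set.ofPred_forall]
  exact .iInter fun k => .iInter fun _ => measurableSet_le (hmeas _) ((hmeas _).add_const _)

lemma stallsAt_zero {γ : ℝ} {N : ℕ} {v : Ed d} (hv : v ≠ 0) :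
    stallsAt γ N 0 v = slowUpTo γ 1 N (‖v‖⁻¹ • v) := by
  have hv' := norm_pos_iff.2 hv
  ext ω
  refine forall₂_congr fun k _ => ?_
  have hgv := norm_pos_iff.2 (glCLM_ne_zero (walk k ω) hv)
  rw [map_smul, norm_smul, norm_inv, norm_norm, one_mul, inv_mul_le_iff₀ hv',
    ← Real.log_le_log_iff hgv (by positivity), Real.log_mul hv'.ne' (Real.exp_pos _).ne',
    Real.log_exp, zero_add, logGrowth, logGrowth, walk, glCLM_one, one_apply_eq_self, sub_self,
    zero_add, sub_le_iff_le_add']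

lemma prepend_mem_stallsAt_succ {γ : ℝ} {N j : ℕ} {v : Ed d} {g : GLd d} {ω : ℕ → GLd d} :
    prepend g ω ∈ stallsAt γ N (j + 1) v ↔ ω ∈ stallsAt γ N j (glCLM g v) := by
  have growth_succ (n : ℕ) : logGrowth (walk (n + 1) (prepend g ω)) v =
      logGrowth (walk n ω) (glCLM g v) + logGrowth g v :=
    logGrowth_mul (walk n ω) g v
  refine forall₂_congr fun k _ => ?_
  rw [Nat.succ_add, growth_succ, growth_succ, add_right_comm, add_le_add_iff_right]

section UniformGrowth

variable {μ : Measure (GLd d)} [IsProbabilityMeasure μ] {c γ : ℝ}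

lemma measure_stallsAt_le {N : ℕ} {ε : ℝ≥0∞}
    (h : ∀ v : Ed d, v ≠ 0 → iidMeasure μ (stallsAt γ N 0 v) ≤ ε) (j : ℕ) {v : Ed d} (hv : v ≠ 0) :
    iidMeasure μ (stallsAt γ N j v) ≤ ε := by
  induction j generalizing v with
  | zero => exact h v hv
  | succ j ih =>
    rw [iidMeasure_apply μ (measurableSet_stallsAt _ _ _ _)]
    simp only [prepend_mem_stallsAt_succ, Set.ofPred_mem_eq]
    calc ∫⁻ g, iidMeasure μ (stallsAt γ N j (glCLM g v)) ∂μ ≤ ∫⁻ _, ε ∂μ :=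
          lintegral_mono fun g => ih (glCLM_ne_zero g hv)
      _ = ε := by rw [lintegral_const, measure_univ, mul_one]

lemma eventually_measure_slowUpTo_le (hμ : ∀ᵐ g ∂μ, LogNormLE c g) (N : ℕ) (v : Ed d) :
    ∀ᶠ w in 𝓝 v, iidMeasure μ (slowUpTo γ 1 N w) ≤ iidMeasure μ (slowUpTo γ 2 N v) := by
  have close : ∀ᶠ w in 𝓝 v, ∀ n ≤ N, Real.exp (n * c) * ‖v - w‖ < Real.exp (γ * n) := by
    refine (Set.finite_le_nat N).eventually_all.2 fun n _ => ?_
    have hcont : Continuous fun w => Real.exp (n * c) * ‖v - w‖ := by fun_prop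
    exact hcont.continuousAt.eventually_lt_const (by simp [Real.exp_pos])
  filter_upwards [close] with w hw
  refine measure_mono_ae ?_
  filter_upwards [LogNormLE.ae_walk hμ] with ω hω hslow n hn
  calc ‖glCLM (walk n ω) v‖ = ‖glCLM (walk n ω) w + glCLM (walk n ω) (v - w)‖ := by
        rw [← map_add, add_sub_cancel]
    _ ≤ 1 * Real.exp (γ * n) + Real.exp (γ * n) :=
      norm_add_le_of_le (hslow n hn) (((hω n).norm_apply_le _).trans (hw n hn).le)
    _ = 2 * Real.exp (γ * n) := by ring

lemma exists_measure_stallsAt_zero_le (hμ : ∀ᵐ g ∂μ, LogNormLE c g)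
    (hslow : ∀ v : Ed d, v ≠ 0 → iidMeasure μ {ω | v ∈ slowVectors γ ω} = 0) {ε : ℝ≥0∞}
    (hε : 0 < ε) : ∃ N, ∀ v : Ed d, v ≠ 0 → iidMeasure μ (stallsAt γ N 0 v) ≤ ε := by
  have on_sphere : ∀ᶠ N in atTop, ∀ v ∈ Metric.sphere (0 : Ed d) 1,
      iidMeasure μ (slowUpTo γ 1 N v) ≤ ε := by
    suffices h : ∀ᶠ p in atTop ×ˢ 𝓝ˢ (Metric.sphere (0 : Ed d) 1),
        iidMeasure μ (slowUpTo γ 1 p.1 p.2) ≤ ε from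
      h.curry.mono fun _ hN => hN.self_of_nhdsSet
    refine (isCompact_sphere _ _).mem_prod_nhdsSet_of_forall fun v hv => ?_
    have hnull : iidMeasure μ (⋂ N, slowUpTo γ (2 : ℕ) N v) = 0 := by
      refine measure_mono_null ?_ (hslow v (ne_zero_of_mem_unit_sphere ⟨v, hv⟩))
      rw [setOf_mem_slowVectors]
      exact Set.subset_iUnion (fun R : ℕ => ⋂ N, slowUpTo γ R N v) 2
    have hlim := tendsto_measure_iInter_atTop
      (fun N => (measurableSet_slowUpTo γ (2 : ℕ) N v).nullMeasurableSet)
      (antitone_slowUpTo γ (2 : ℕ) v) ⟨0, measure_ne_top (iidMeasure μ) _⟩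
    rw [hnull] at hlim
    obtain ⟨N, hN⟩ := (hlim.eventually_lt_const hε).exists
    filter_upwards [(eventually_ge_atTop N).prod_mk
      (eventually_measure_slowUpTo_le (γ := γ) hμ N v)]
      with x hx
    exact (measure_mono (antitone_slowUpTo γ 1 x.2 hx.1)).trans (hx.2.trans hN.le)
  obtain ⟨N, hN⟩ := on_sphere.exists
  refine ⟨N, fun v hv => ?_⟩
  rw [stallsAt_zero hv]
  exact hN _ (by rw [mem_sphere_zero_iff_norm]; exact norm_smul_inv_norm (𝕜 := ℝ) hv)

lemma ae_logGrowth_walk_ge (hμ : ∀ᵐ g ∂μ, LogNormLE c g) (N n : ℕ) {v : Ed d} (hv : v ≠ 0) :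
    ∀ᵐ ω ∂iidMeasure μ, γ * n - (c + |γ|) * (N + ∑ j ∈ Finset.range n,
      (stallsAt γ N j v).indicator (1 : (ℕ → GLd d) → ℝ) ω) ≤ logGrowth (walk n ω) v := by
  classical
  filter_upwards [ae_forall_iidMeasure hμ] with ω hω
  set x : ℕ → ℝ := fun j => logGrowth (walk j ω) v - γ * j with hx
  have step (j : ℕ) : |x (j + 1) - x j| ≤ c + |γ| := by
    have growth_succ : logGrowth (walk (j + 1) ω) v =
        logGrowth (ω j) (glCLM (walk j ω) v) + logGrowth (walk j ω) v := by
      rw [add_comm, walk_add, logGrowth_mul]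
      simp [walk, iterate_shift_apply]
    calc |x (j + 1) - x j| = |logGrowth (ω j) (glCLM (walk j ω) v) - γ| := by
          simp only [hx, growth_succ, Nat.cast_add_one]; ring_nf
      _ ≤ c + |γ| := (abs_sub _ _).trans
        (add_le_add_left ((hω j).abs_logGrowth_le (glCLM_ne_zero _ hv)) _)
  have hstall (j : ℕ) : (∀ i ≤ N, x (j + i) ≤ x j) ↔ ω ∈ stallsAt γ N j v := by
    refine forall₂_congr fun i _ => ?_
    simp only [hx, Nat.cast_add]
    constructor <;> intro h <;> linarith
  have hpath := sub_le_mul_card_stalling step N n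
  simp only [hstall, Finset.card_filter, Nat.cast_sum, Nat.cast_ite, Nat.cast_one, Nat.cast_zero]
    at hpath
  have x_zero : x 0 = 0 := by simp [hx, logGrowth, walk, glCLM_one]
  simp only [Set.indicator_apply, Pi.one_apply]
  rw [x_zero] at hpath
  linarith

lemma integral_logGrowth_mconvN_ge (hμ : ∀ᵐ g ∂μ, LogNormLE c g) {ε : ℝ} (hε : 0 ≤ ε) {N : ℕ}
    (h : ∀ v : Ed d, v ≠ 0 → iidMeasure μ (stallsAt γ N 0 v) ≤ ENNReal.ofReal ε)
    {v : Ed d} (hv : v ≠ 0) (n : ℕ) :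
    γ * n - (c + |γ|) * (N + n * ε) ≤ ∫ g, logGrowth g v ∂mconvN μ n := by
  have hc : 0 ≤ c := by
    obtain ⟨g, hg⟩ := hμ.exists
    exact (abs_nonneg _).trans (hg.abs_logGrowth_le hv)
  have hind (j : ℕ) : Integrable ((stallsAt γ N j v).indicator (1 : (ℕ → GLd d) → ℝ))
      (iidMeasure μ) := (integrable_const 1).indicator (measurableSet_stallsAt _ _ _ _)
  have hsum := integrable_finsetSum (Finset.range n) fun j _ => hind j
  have hcount : Integrable (fun ω => N + ∑ j ∈ Finset.range n,
      (stallsAt γ N j v).indicator (1 : (ℕ → GLd d) → ℝ) ω) (iidMeasure μ) :=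
    (integrable_const _).add hsum
  have hprob : ∑ j ∈ Finset.range n, (iidMeasure μ).real (stallsAt γ N j v) ≤ n * ε := by
    simpa only [Finset.card_range, nsmul_eq_mul, Measure.real] using
      Finset.sum_le_card_nsmul (Finset.range n) _ ε fun j _ =>
        ENNReal.toReal_le_of_le_ofReal hε (measure_stallsAt_le h j hv)
  have hgrowth : Integrable (fun ω => logGrowth (walk n ω) v) (iidMeasure μ) :=
    .of_bound ((measurable_logGrowth v).comp (measurable_walk n)).aestronglyMeasurable (n * c)
      ((LogNormLE.ae_walk hμ).mono fun ω hω => (hω n).abs_logGrowth_le hv)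
  rw [integral_mconvN μ n (measurable_logGrowth v)]
  calc γ * n - (c + |γ|) * (N + n * ε)
      ≤ γ * n - (c + |γ|) * (N + ∑ j ∈ Finset.range n, (iidMeasure μ).real (stallsAt γ N j v)) := by
        gcongr
    _ = ∫ ω, γ * n - (c + |γ|) * (N + ∑ j ∈ Finset.range n,
        (stallsAt γ N j v).indicator (1 : (ℕ → GLd d) → ℝ) ω) ∂iidMeasure μ := by
        rw [integral_sub (integrable_const _) (hcount.const_mul _),
          integral_const_mul (c + |γ|), integral_add (integrable_const _) hsum,
          integral_finsetSum _ fun j _ => hind j]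
        simp only [integral_const, probReal_univ, one_smul,
          integral_indicator_one (measurableSet_stallsAt _ _ _ _)]
    _ ≤ ∫ ω, logGrowth (walk n ω) v ∂iidMeasure μ :=
        integral_mono_ae ((integrable_const _).sub (hcount.const_mul _)) hgrowth
          (ae_logGrowth_walk_ge hμ N n hv)

lemma eventually_mul_le_integral_logGrowth (hμ : ∀ᵐ g ∂μ, LogNormLE c g) (hqi : QuasiIrreducible μ)
    {γ' : ℝ} (hγ' : γ' < L1 μ) :
    ∀ᶠ n : ℕ in atTop, ∀ v : Ed d, v ≠ 0 → γ' * n ≤ ∫ g, logGrowth g v ∂mconvN μ n := by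
  obtain ⟨γ, hγ'γ, hγ⟩ := exists_between hγ'
  obtain ⟨ε, hε, hsmall⟩ := exists_pos_mul_lt (half_pos (sub_pos.2 hγ'γ)) (c + |γ|)
  obtain ⟨N, hN⟩ := exists_measure_stallsAt_zero_le hμ
    (fun v => measure_mem_slowVectors_eq_zero hμ hqi hγ) (ENNReal.ofReal_pos.2 hε)
  filter_upwards [(tendsto_natCast_atTop_atTop.const_mul_atTop
    (half_pos (sub_pos.2 hγ'γ))).eventually_ge_atTop ((c + |γ|) * N)] with n hn v hv
  have := mul_le_mul_of_nonneg_right hsmall.le n.cast_nonneg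
  linarith [integral_logGrowth_mconvN_ge hμ hε.le hN hv n]

end UniformGrowth

/-! ### Contraction of the projective distance -/

lemma pdelta_mk {p q : Ed d} (hp : p ≠ 0) (hq : q ≠ 0) :
    pdelta (.mk ℝ p hp) (.mk ℝ q hq) = area p q / (‖p‖ * ‖q‖) := by
  obtain ⟨a, ha⟩ := Projectivization.exists_smul_eq_mk_rep ℝ p hp
  obtain ⟨b, hb⟩ := Projectivization.exists_smul_eq_mk_rep ℝ q hq
  have hab : |(a * b : ℝ)| ≠ 0 := abs_ne_zero.2 (mul_ne_zero a.ne_zero b.ne_zero)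
  rw [pdelta, ← area, ← ha, ← hb, Units.smul_def, Units.smul_def, area_smul_smul, norm_smul,
    norm_smul, mul_mul_mul_comm, ← norm_mul, Real.norm_eq_abs, mul_div_mul_left _ _ hab]

lemma pdelta_pos {x y : Pd d} (hxy : x ≠ y) : 0 < pdelta x y := by
  have hx := norm_pos_iff.2 x.rep_nonzero
  have hy := norm_pos_iff.2 y.rep_nonzero
  refine div_pos ((area_nonneg x.rep y.rep).lt_of_ne' fun h => hxy ?_) (by positivity)
  obtain ⟨r, hr, hxr⟩ := exists_smul_eq_of_area_eq_zero x.rep_nonzero y.rep_nonzero h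
  rw [← x.mk_rep, ← y.mk_rep, Projectivization.mk_eq_mk_iff']
  exact ⟨r⁻¹, by rw [hxr, inv_smul_smul₀ hr]⟩

lemma pact_eq_mk (g : GLd d) (x : Pd d) :
    pact g x = .mk ℝ (glCLM g x.rep) (glCLM_ne_zero g x.rep_nonzero) := by
  conv_lhs => rw [← x.mk_rep]
  rfl

lemma pact_one (x : Pd d) : pact 1 x = x := by
  induction x using Projectivization.ind with
  | h p hp => simp [pact, Projectivization.map_mk, glCLM_one]

lemma pact_mul (g h : GLd d) (x : Pd d) : pact (g * h) x = pact g (pact h x) := by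
  induction x using Projectivization.ind with
  | h p hp => simp [pact, Projectivization.map_mk, glCLM_mul_apply]

lemma pact_injective (g : GLd d) : Function.Injective (pact g) :=
  Projectivization.map_injective _ (glLinear_injective g)

/-- The factor by which the projective action of `g` changes the distance from `x` to `y`, i.e. the
quantity whose `α`-th power is averaged in `kalpha`. It is `0` when `x = y`. -/
def projRatio (g : GLd d) (x y : Pd d) : ℝ := pdelta (pact g x) (pact g y) / pdelta x y

section ProjRatio

variable {x y : Pd d}

lemma projRatio_pos (g : GLd d) (hxy : x ≠ y) : 0 < projRatio g x y :=
  div_pos (pdelta_pos ((pact_injective g).ne hxy)) (pdelta_pos hxy)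

lemma projRatio_one (hxy : x ≠ y) : projRatio 1 x y = 1 := by
  rw [projRatio, pact_one, pact_one, div_self (pdelta_pos hxy).ne']

lemma projRatio_mul (g h : GLd d) (hxy : x ≠ y) :
    projRatio (g * h) x y = projRatio g (pact h x) (pact h y) * projRatio h x y := by
  rw [projRatio, projRatio, projRatio, pact_mul, pact_mul,
    div_mul_div_cancel₀ (pdelta_pos ((pact_injective h).ne hxy)).ne']

lemma pdelta_pact (g : GLd d) (x y : Pd d) : pdelta (pact g x) (pact g y) =
    area (glCLM g x.rep) (glCLM g y.rep) / (‖glCLM g x.rep‖ * ‖glCLM g y.rep‖) := by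
  rw [pact_eq_mk, pact_eq_mk, pdelta_mk]

lemma measurable_projRatio (x y : Pd d) : Measurable fun g : GLd d => projRatio g x y := by
  simp only [projRatio, pdelta_pact]
  exact ((continuous_area_glCLM _ _).measurable.div
    ((continuous_glCLM_apply _).norm.mul (continuous_glCLM_apply _).norm).measurable).div_const _

lemma log_projRatio_le [Nontrivial (Fin d)] (g : GLd d) (hxy : x ≠ y) :
    Real.log (projRatio g x y) ≤
      Real.log (N2 g) - logGrowth g x.rep - logGrowth g y.rep := by
  have hx := norm_pos_iff.2 x.rep_nonzero
  have hy := norm_pos_iff.2 y.rep_nonzero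
  have hgx := norm_pos_iff.2 (glCLM_ne_zero g x.rep_nonzero)
  have hgy := norm_pos_iff.2 (glCLM_ne_zero g y.rep_nonzero)
  have harea : 0 < area x.rep y.rep := (div_pos_iff_of_pos_right (by positivity)).1 (pdelta_pos hxy)
  have hN2 := N2_pos g
  have hle : projRatio g x y ≤
      N2 g * (‖x.rep‖ * ‖y.rep‖) / (‖glCLM g x.rep‖ * ‖glCLM g y.rep‖) := by
    rw [projRatio, div_le_iff₀ (pdelta_pos hxy), pdelta_pact, pdelta, ← area]
    calc area (glCLM g x.rep) (glCLM g y.rep) / (‖glCLM g x.rep‖ * ‖glCLM g y.rep‖)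
        ≤ N2 g * area x.rep y.rep / (‖glCLM g x.rep‖ * ‖glCLM g y.rep‖) := by
          gcongr; exact area_glCLM_le g _ _
      _ = _ := by field_simp
  have hlog := Real.log_le_log (projRatio_pos g hxy) hle
  rw [Real.log_div (by positivity) (by positivity), Real.log_mul (by positivity) (by positivity),
    Real.log_mul hx.ne' hy.ne', Real.log_mul hgx.ne' hgy.ne'] at hlog
  rw [logGrowth, logGrowth]
  linarith

lemma LogNormLE.abs_log_projRatio_le [Nontrivial (Fin d)] {a : ℝ} {g : GLd d} (hg : LogNormLE a g)
    (hxy : x ≠ y) : |Real.log (projRatio g x y)| ≤ 4 * a := by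
  have log_le {g : GLd d} (hg : LogNormLE a g) {x y : Pd d} (hxy : x ≠ y) :
      Real.log (projRatio g x y) ≤ 4 * a := by
    linarith [log_projRatio_le g hxy, (abs_le.1 hg.abs_log_N2_le).2,
      (abs_le.1 (hg.abs_logGrowth_le x.rep_nonzero)).1,
      (abs_le.1 (hg.abs_logGrowth_le y.rep_nonzero)).1]
  have hgxy := (pact_injective g).ne hxy
  have hinv := projRatio_mul g⁻¹ g hxy
  rw [inv_mul_cancel, projRatio_one hxy] at hinv
  have hlog := Real.log_mul (projRatio_pos g⁻¹ hgxy).ne' (projRatio_pos g hxy).ne'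
  rw [← hinv, Real.log_one] at hlog
  exact abs_le.2 ⟨by linarith [log_le hg.inv hgxy], log_le hg hxy⟩

end ProjRatio

section Drift

variable {μ : Measure (GLd d)} [IsProbabilityMeasure μ] {c : ℝ}

lemma LogNormLE.integrable_mconvN (hμ : ∀ᵐ g ∂μ, LogNormLE c g) {n : ℕ} {φ : GLd d → ℝ}
    (hφ : Measurable φ) {C : ℝ} (hC : ∀ g, LogNormLE (n * c) g → |φ g| ≤ C) :
    Integrable φ (mconvN μ n) :=
  .of_bound hφ.aestronglyMeasurable C ((LogNormLE.ae_mconvN hμ n).mono hC)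

variable [Nontrivial (Fin d)] {x y : Pd d}

lemma integral_log_projRatio_le (hμ : ∀ᵐ g ∂μ, LogNormLE c g) (n : ℕ) (hxy : x ≠ y) :
    ∫ g, Real.log (projRatio g x y) ∂mconvN μ n ≤ ∫ g, Real.log (N2 g) ∂mconvN μ n -
      ∫ g, logGrowth g x.rep ∂mconvN μ n - ∫ g, logGrowth g y.rep ∂mconvN μ n := by
  have hN2 : Integrable (fun g => Real.log (N2 g)) (mconvN μ n) :=
    LogNormLE.integrable_mconvN hμ measurable_N2.log fun g hg => hg.abs_log_N2_le
  have hgrowth (z : Pd d) : Integrable (fun g => logGrowth g z.rep) (mconvN μ n) :=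
    LogNormLE.integrable_mconvN hμ (measurable_logGrowth _)
      fun g hg => hg.abs_logGrowth_le z.rep_nonzero
  have hratio : Integrable (fun g => Real.log (projRatio g x y)) (mconvN μ n) :=
    LogNormLE.integrable_mconvN hμ (measurable_projRatio x y).log
      fun g hg => hg.abs_log_projRatio_le hxy
  have hdiff : Integrable (fun g => Real.log (N2 g) - logGrowth g x.rep) (mconvN μ n) :=
    hN2.sub (hgrowth x)
  rw [← integral_sub hN2 (hgrowth x), ← integral_sub hdiff (hgrowth y)]
  exact integral_mono hratio (hdiff.sub (hgrowth y)) fun g => log_projRatio_le g hxy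

lemma exists_integral_log_projRatio_le_neg (hμ : ∀ᵐ g ∂μ, LogNormLE c g)
    (hqi : QuasiIrreducible μ) (hgap : L2 μ < L1 μ) :
    ∃ n : ℕ, 0 < n ∧ ∃ η > 0, ∀ x y : Pd d, x ≠ y →
      ∫ g, Real.log (projRatio g x y) ∂mconvN μ n ≤ -η := by
  obtain ⟨γ, hL12, hL1⟩ : ∃ γ, L12 μ / 2 < γ ∧ γ < L1 μ :=
    exists_between (by rw [L2] at hgap; linarith)
  have hN2 := (tendsto_L12 hμ).eventually_lt_const (show L12 μ < 2 * γ by linarith)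
  obtain ⟨n, hN2, hgrowth, hn⟩ := (hN2.and
    ((eventually_mul_le_integral_logGrowth hμ hqi hL1).and (eventually_gt_atTop 0))).exists
  rw [inv_mul_lt_iff₀ (Nat.cast_pos.2 hn)] at hN2
  refine ⟨n, hn, n * (2 * γ) - ∫ g, Real.log (N2 g) ∂mconvN μ n, sub_pos.2 hN2, fun x y hxy => ?_⟩
  linarith [integral_log_projRatio_le hμ n hxy, hgrowth x.rep x.rep_nonzero,
    hgrowth y.rep y.rep_nonzero]

end Drift

/-! ### Average Hölder constants -/

section ExponentialMoment

variable {Ω : Type*} [MeasurableSpace Ω] {P : Measure Ω} [IsProbabilityMeasure P] {X : Ω → ℝ}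
  {M : ℝ}

lemma mgf_le_exp_mul_integral_add (hX : AEMeasurable X P) (hM : ∀ᵐ ω ∂P, |X ω| ≤ M) (t : ℝ) :
    ProbabilityTheory.mgf X P t ≤ Real.exp (t * ∫ ω, X ω ∂P + M ^ 2 * t ^ 2 / 2) := by
  have hoeffding := (ProbabilityTheory.hasSubgaussianMGF_of_mem_Icc hX
    (hM.mono fun ω hω => abs_le.1 hω)).mgf_le t
  have hX_eq : X = fun ω => (∫ ω, X ω ∂P) + (X ω - ∫ ω, X ω ∂P) := by
    funext ω; ring
  have hvar : (((‖M - -M‖₊ / 2) ^ 2 : ℝ≥0) : ℝ) = M ^ 2 := by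
    rw [sub_neg_eq_add, NNReal.coe_pow, NNReal.coe_div, coe_nnnorm, ← two_mul, norm_mul,
      Real.norm_ofNat, NNReal.coe_ofNat, mul_div_cancel_left₀ _ two_ne_zero,
      Real.norm_eq_abs, sq_abs]
  rw [hvar] at hoeffding
  conv_lhs => rw [hX_eq]
  rw [ProbabilityTheory.mgf_const_add, Real.exp_add]
  gcongr

lemma exists_forall_mgf_le_of_integral_le_neg {η : ℝ} (hη : 0 < η) (M : ℝ) :
    ∃ α : ℝ, 0 < α ∧ α ≤ 1 ∧ ∃ ρ : ℝ, 0 < ρ ∧ ρ < 1 ∧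
      ∀ X : Ω → ℝ, AEMeasurable X P → (∀ᵐ ω ∂P, |X ω| ≤ M) → ∫ ω, X ω ∂P ≤ -η →
        ProbabilityTheory.mgf X P α ≤ ρ := by
  have hM : 0 < M ^ 2 + 1 := by positivity
  set α := min 1 (η / (M ^ 2 + 1))
  have hα0 : 0 < α := lt_min one_pos (div_pos hη hM)
  refine ⟨α, hα0, min_le_left _ _, Real.exp (-(α * η / 2)), Real.exp_pos _,
    Real.exp_lt_one_iff.2 (neg_lt_zero.2 (by positivity)), fun X hX hXM hXη => ?_⟩
  refine (mgf_le_exp_mul_integral_add hX hXM α).trans (Real.exp_le_exp.2 ?_)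
  have hαη : α * (M ^ 2 + 1) ≤ η := (le_div_iff₀ hM).1 (min_le_right _ _)
  nlinarith [mul_le_mul_of_nonneg_left hXη hα0.le, mul_le_mul_of_nonneg_left hαη hα0.le]

end ExponentialMoment

/-- The average Hölder constant `kalpha` with values in `[0, ∞]`, which avoids the junk values of
divergent integrals and unbounded suprema. -/
def ekalpha (α : ℝ) (μ : Measure (GLd d)) : ℝ≥0∞ :=
  ⨆ (x : Pd d) (y : Pd d) (_ : x ≠ y), ∫⁻ g, ENNReal.ofReal (projRatio g x y ^ α) ∂μ

section Ekalpha

variable {α : ℝ} {μ ν : Measure (GLd d)} {x y : Pd d}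

lemma ekalpha_le_iff {b : ℝ≥0∞} : ekalpha α μ ≤ b ↔
    ∀ x y : Pd d, x ≠ y → ∫⁻ g, ENNReal.ofReal (projRatio g x y ^ α) ∂μ ≤ b := by
  simp only [ekalpha, iSup_le_iff]

lemma lintegral_le_ekalpha (hxy : x ≠ y) :
    ∫⁻ g, ENNReal.ofReal (projRatio g x y ^ α) ∂μ ≤ ekalpha α μ :=
  ekalpha_le_iff.1 le_rfl x y hxy

lemma measurable_ofReal_projRatio_rpow (α : ℝ) (x y : Pd d) :
    Measurable fun g : GLd d => ENNReal.ofReal (projRatio g x y ^ α) :=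
  ((measurable_projRatio x y).pow_const α).ennreal_ofReal

lemma kalpha_le {b : ℝ} (hb : 0 ≤ b) (h : ekalpha α μ ≤ ENNReal.ofReal b) : kalpha α μ ≤ b := by
  refine Real.sSup_le ?_ hb
  rintro _ ⟨x, y, hxy, rfl⟩
  change ∫ g, projRatio g x y ^ α ∂μ ≤ b
  rw [integral_eq_lintegral_of_nonneg_ae
    (.of_forall fun g => Real.rpow_nonneg (projRatio_pos g hxy).le α)
    ((measurable_projRatio x y).pow_const α).aestronglyMeasurable]
  exact ENNReal.toReal_le_of_le_ofReal hb ((lintegral_le_ekalpha hxy).trans h)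

lemma ekalpha_dirac_one (α : ℝ) : ekalpha α (Measure.dirac (1 : GLd d)) ≤ 1 := by
  refine ekalpha_le_iff.2 fun x y hxy => ?_
  rw [lintegral_dirac' _ (measurable_ofReal_projRatio_rpow α x y), projRatio_one hxy,
    Real.one_rpow, ENNReal.ofReal_one]

lemma ekalpha_mconv_le [SFinite μ] [SFinite ν] :
    ekalpha α (μ.mconv ν) ≤ ekalpha α μ * ekalpha α ν := by
  refine ekalpha_le_iff.2 fun x y hxy => ?_
  have hmeas := measurable_ofReal_projRatio_rpow (d := d) α
  have hsplit (g h : GLd d) : ENNReal.ofReal (projRatio (g * h) x y ^ α) =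
      ENNReal.ofReal (projRatio g (pact h x) (pact h y) ^ α) *
        ENNReal.ofReal (projRatio h x y ^ α) := by
    have hg := (projRatio_pos g ((pact_injective h).ne hxy)).le
    rw [projRatio_mul g h hxy, Real.mul_rpow hg (projRatio_pos h hxy).le,
      ENNReal.ofReal_mul (Real.rpow_nonneg hg α)]
  calc ∫⁻ g, ENNReal.ofReal (projRatio g x y ^ α) ∂μ.mconv ν
      = ∫⁻ h, ∫⁻ g, ENNReal.ofReal (projRatio (g * h) x y ^ α) ∂μ ∂ν := by
        rw [Measure.lintegral_mconv_eq_lintegral_prod (hmeas x y)]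
        exact lintegral_prod_symm' _ ((hmeas x y).comp measurable_mul)
    _ ≤ ∫⁻ h, ekalpha α μ * ENNReal.ofReal (projRatio h x y ^ α) ∂ν := by
        refine lintegral_mono fun h => ?_
        simp only [hsplit]
        rw [lintegral_mul_const _ (hmeas _ _)]
        gcongr
        exact lintegral_le_ekalpha ((pact_injective h).ne hxy)
    _ ≤ ekalpha α μ * ekalpha α ν := by
        rw [lintegral_const_mul _ (hmeas x y)]
        gcongr
        exact lintegral_le_ekalpha hxy

lemma ekalpha_mconvN_mul_le [IsProbabilityMeasure μ] (m k : ℕ) :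
    ekalpha α (mconvN μ (m * k)) ≤ ekalpha α (mconvN μ m) ^ k := by
  induction k with
  | zero => simpa only [Nat.mul_zero, mconvN_zero, pow_zero] using ekalpha_dirac_one α
  | succ k ih =>
    rw [Nat.mul_succ, mconvN_add, pow_succ]
    exact ekalpha_mconv_le.trans (mul_le_mul_left ih _)

end Ekalpha

section Contraction

variable {μ : Measure (GLd d)} [IsProbabilityMeasure μ] {c α : ℝ} [Nontrivial (Fin d)]
  {x y : Pd d}

lemma LogNormLE.projRatio_rpow_le {a : ℝ} {g : GLd d} (hg : LogNormLE a g) (hα : 0 ≤ α)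
    (hxy : x ≠ y) : projRatio g x y ^ α ≤ Real.exp (4 * a * α) := by
  rw [Real.rpow_def_of_pos (projRatio_pos g hxy), Real.exp_le_exp]
  exact mul_le_mul_of_nonneg_right (abs_le.1 (hg.abs_log_projRatio_le hxy)).2 hα

lemma ae_projRatio_rpow_le (hμ : ∀ᵐ g ∂μ, LogNormLE c g) (hα : 0 ≤ α) (n : ℕ) (hxy : x ≠ y) :
    ∀ᵐ g ∂mconvN μ n, ENNReal.ofReal (projRatio g x y ^ α) ≤
      ENNReal.ofReal (Real.exp (4 * (n * c) * α)) :=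
  (LogNormLE.ae_mconvN hμ n).mono fun _ hg => ENNReal.ofReal_le_ofReal (hg.projRatio_rpow_le hα hxy)

lemma ekalpha_mconvN_le_exp (hμ : ∀ᵐ g ∂μ, LogNormLE c g) (hα : 0 ≤ α) (n : ℕ) :
    ekalpha α (mconvN μ n) ≤ ENNReal.ofReal (Real.exp (4 * (n * c) * α)) := by
  refine ekalpha_le_iff.2 fun x y hxy => ?_
  calc ∫⁻ g, ENNReal.ofReal (projRatio g x y ^ α) ∂mconvN μ n
      ≤ ∫⁻ _, ENNReal.ofReal (Real.exp (4 * (n * c) * α)) ∂mconvN μ n :=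
        lintegral_mono_ae (ae_projRatio_rpow_le hμ hα n hxy)
    _ = ENNReal.ofReal (Real.exp (4 * (n * c) * α)) := by
        rw [lintegral_const, measure_univ, mul_one]

lemma exists_ekalpha_mconvN_le_lt_one (hμ : ∀ᵐ g ∂μ, LogNormLE c g) (hqi : QuasiIrreducible μ)
    (hgap : L2 μ < L1 μ) :
    ∃ n : ℕ, 0 < n ∧ ∃ α : ℝ, 0 < α ∧ α ≤ 1 ∧ ∃ ρ : ℝ, 0 < ρ ∧ ρ < 1 ∧
      ekalpha α (mconvN μ n) ≤ ENNReal.ofReal ρ := by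
  obtain ⟨n, hn, η, hη, hdrift⟩ := exists_integral_log_projRatio_le_neg hμ hqi hgap
  obtain ⟨α, hα0, hα1, ρ, hρ0, hρ1, hmgf⟩ :=
    exists_forall_mgf_le_of_integral_le_neg (P := mconvN μ n) hη (4 * (n * c))
  refine ⟨n, hn, α, hα0, hα1, ρ, hρ0, hρ1, ekalpha_le_iff.2 fun x y hxy => ?_⟩
  have hrpow (g : GLd d) : projRatio g x y ^ α = Real.exp (α * Real.log (projRatio g x y)) := by
    rw [Real.rpow_def_of_pos (projRatio_pos g hxy), mul_comm]
  have hint : Integrable (fun g => projRatio g x y ^ α) (mconvN μ n) :=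
    LogNormLE.integrable_mconvN hμ ((measurable_projRatio x y).pow_const α) fun g hg => by
      rw [abs_of_pos (Real.rpow_pos_of_pos (projRatio_pos g hxy) α)]
      exact hg.projRatio_rpow_le hα0.le hxy
  rw [← ofReal_integral_eq_lintegral_ofReal hint
    (.of_forall fun g => Real.rpow_nonneg (projRatio_pos g hxy).le α), funext hrpow]
  exact ENNReal.ofReal_le_ofReal (hmgf _ (measurable_projRatio x y).log.aemeasurable
    ((LogNormLE.ae_mconvN hμ n).mono fun g hg => hg.abs_log_projRatio_le hxy) (hdrift x y hxy))

end Contraction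

/-! ### Perturbation in total variation -/

section Convolution

variable {M : Type*} [Monoid M] [MeasurableSpace M] [MeasurableMul₂ M] {μ μ' ν ν' : Measure M}

lemma mconv_mono [SFinite ν'] (hμ : μ ≤ μ')
    (hν : ν ≤ ν') : μ.mconv ν ≤ μ'.mconv ν' :=
  Measure.map_mono (Measure.prod_mono hμ hν) measurable_mul

lemma mconv_apply_univ [SFinite ν] :
    (μ.mconv ν) Set.univ = μ Set.univ * ν Set.univ := by
  rw [Measure.mconv, Measure.map_apply measurable_mul .univ, Set.preimage_univ,
    ← Set.univ_prod_univ, Measure.prod_prod]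

end Convolution

section TotalVariation

variable {μ ν : Measure (GLd d)}

-- `P` is the positive part of the Jordan decomposition of `μ - ν`.
lemma exists_le_add_of_tvDist (μ ν : Measure (GLd d)) [IsFiniteMeasure μ] [IsFiniteMeasure ν] :
    ∃ P : Measure (GLd d), IsFiniteMeasure P ∧ μ ≤ ν + P ∧
      P Set.univ ≤ ENNReal.ofReal (tvDist μ ν) := by
  set s := μ.toSignedMeasure - ν.toSignedMeasure with hs
  set j := s.toJordanDecomposition
  refine ⟨j.posPart, inferInstance, Measure.le_iff.2 fun E hE => ?_, ?_⟩
  · have hjordan : s E = (j.posPart.toSignedMeasure - j.negPart.toSignedMeasure) E :=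
      congrArg (fun t : SignedMeasure (GLd d) => t E)
        (SignedMeasure.toSignedMeasure_toJordanDecomposition s).symm
    simp only [hs, FunLike.coe_sub, Pi.sub_apply,
      Measure.toSignedMeasure_apply_measurable hE] at hjordan
    have hneg : 0 ≤ j.negPart.real E := measureReal_nonneg
    rw [Measure.add_apply, ← ENNReal.toReal_le_toReal (measure_ne_top _ _) (by finiteness),
      ENNReal.toReal_add (by finiteness) (by finiteness)]
    change μ.real E ≤ ν.real E + j.posPart.real E
    linarith
  · rw [tvDist, SignedMeasure.totalVariation, Measure.add_apply,
      ENNReal.ofReal_toReal (by finiteness)]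
    exact le_self_add

lemma exists_mconvN_le_add [IsProbabilityMeasure μ] [IsProbabilityMeasure ν] {P : Measure (GLd d)}
    [IsFiniteMeasure P] (hμ : μ ≤ ν + P) (n : ℕ) :
    ∃ Q : Measure (GLd d), IsFiniteMeasure Q ∧ mconvN μ n ≤ mconvN ν n + Q ∧
      Q Set.univ = n * P Set.univ := by
  induction n with
  | zero => exact ⟨0, inferInstance, by simp [mconvN_zero], by simp⟩
  | succ n ih =>
    obtain ⟨Q, _, hQ, hQu⟩ := ih
    refine ⟨(mconvN ν n).mconv P + Q.mconv μ, inferInstance, ?_, ?_⟩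
    · rw [mconvN_succ, mconvN_succ]
      calc (mconvN μ n).mconv μ
          ≤ (mconvN ν n + Q).mconv μ := mconv_mono hQ le_rfl
        _ = (mconvN ν n).mconv μ + Q.mconv μ := Measure.add_mconv _ _ _
        _ ≤ (mconvN ν n).mconv (ν + P) + Q.mconv μ := by
          gcongr
          exact mconv_mono le_rfl hμ
        _ = (mconvN ν n).mconv ν + ((mconvN ν n).mconv P + Q.mconv μ) := by
          rw [Measure.mconv_add, add_assoc]
    · rw [Measure.add_apply, mconv_apply_univ, mconv_apply_univ,
        measure_univ (μ := mconvN ν n), measure_univ (μ := μ), hQu]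
      push_cast
      ring

end TotalVariation

lemma lintegral_le_add_of_le_add {Ω : Type*} [MeasurableSpace Ω] {μ ν Q : Measure Ω}
    (hμ : μ ≤ ν + Q) {f : Ω → ℝ≥0∞} {B : ℝ≥0∞} (hf : ∀ᵐ ω ∂μ, f ω ≤ B) :
    ∫⁻ ω, f ω ∂μ ≤ ∫⁻ ω, f ω ∂ν + B * Q Set.univ :=
  calc ∫⁻ ω, f ω ∂μ
      ≤ ∫⁻ ω, min (f ω) B ∂μ := lintegral_mono_ae (hf.mono fun _ h => le_min le_rfl h)
    _ ≤ ∫⁻ ω, min (f ω) B ∂ν + ∫⁻ ω, min (f ω) B ∂Q :=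
        (lintegral_mono' hμ le_rfl).trans_eq (lintegral_add_measure _ _ _)
    _ ≤ ∫⁻ ω, f ω ∂ν + ∫⁻ _, B ∂Q := by
        gcongr
        exacts [min_le_left _ _, min_le_right _ _]
    _ = ∫⁻ ω, f ω ∂ν + B * Q Set.univ := by rw [lintegral_const]

section Perturbation

variable {μ ν : Measure (GLd d)} [IsProbabilityMeasure μ] [IsProbabilityMeasure ν] {c α : ℝ}
  [Nontrivial (Fin d)]

lemma ekalpha_mconvN_le_add_tvDist (hμ : ∀ᵐ g ∂μ, LogNormLE c g) (hα : 0 ≤ α) (n : ℕ) :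
    ekalpha α (mconvN μ n) ≤ ekalpha α (mconvN ν n) +
      ENNReal.ofReal (Real.exp (4 * (n * c) * α) * (n * tvDist μ ν)) := by
  obtain ⟨P, _, hP, hPu⟩ := exists_le_add_of_tvDist μ ν
  obtain ⟨Q, _, hQ, hQu⟩ := exists_mconvN_le_add hP n
  refine ekalpha_le_iff.2 fun x y hxy => ?_
  refine (lintegral_le_add_of_le_add hQ (ae_projRatio_rpow_le hμ hα n hxy)).trans ?_
  rw [ENNReal.ofReal_mul (Real.exp_pos _).le, ENNReal.ofReal_mul n.cast_nonneg,
    ENNReal.ofReal_natCast, hQu]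
  gcongr
  exact lintegral_le_ekalpha hxy

lemma exists_forall_ekalpha_mconvN_le_of_tvDist_lt (c : ℝ) (hα : 0 ≤ α) {n : ℕ} {ρ ρ' : ℝ}
    (hρ : 0 ≤ ρ) (hρ' : ρ < ρ') (hν : ekalpha α (mconvN ν n) ≤ ENNReal.ofReal ρ) :
    ∃ ε : ℝ, 0 < ε ∧ ∀ (μ : Measure (GLd d)) [IsProbabilityMeasure μ],
      (∀ᵐ g ∂μ, LogNormLE c g) → tvDist μ ν < ε →
        ekalpha α (mconvN μ n) ≤ ENNReal.ofReal ρ' := by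
  set K := Real.exp (4 * (n * c) * α) * n with hK
  have : 0 ≤ K := by positivity
  refine ⟨(ρ' - ρ) / (K + 1), div_pos (sub_pos.2 hρ') (by positivity), fun μ _ hμ htv => ?_⟩
  have htv0 : 0 ≤ tvDist μ ν := ENNReal.toReal_nonneg
  calc ekalpha α (mconvN μ n)
      ≤ ENNReal.ofReal ρ + ENNReal.ofReal (K * tvDist μ ν) := by
        rw [hK, mul_assoc]
        exact (ekalpha_mconvN_le_add_tvDist hμ hα n).trans (by gcongr)
    _ = ENNReal.ofReal (ρ + K * tvDist μ ν) := (ENNReal.ofReal_add hρ (by positivity)).symm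
    _ ≤ ENNReal.ofReal ρ' := by
        rw [lt_div_iff₀ (by positivity)] at htv
        exact ENNReal.ofReal_le_ofReal (by linarith)

end Perturbation

/-! ### Exponential decay -/

lemma pow_div_le_inv_mul_rpow {ρ : ℝ} (hρ0 : 0 < ρ) (hρ1 : ρ ≤ 1) (k n : ℕ) :
    ρ ^ (n / k) ≤ ρ⁻¹ * (ρ ^ (-(1 / (k : ℝ)))) ^ (-(n : ℝ)) := by
  have hfloor : (n : ℝ) / k - 1 ≤ (n / k : ℕ) := by
    rw [← Nat.floor_div_eq_div (K := ℝ)]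
    exact (Nat.sub_one_lt_floor _).le
  calc ρ ^ (n / k) = ρ ^ ((n / k : ℕ) : ℝ) := (Real.rpow_natCast _ _).symm
    _ ≤ ρ ^ ((n : ℝ) / k - 1) := Real.rpow_le_rpow_of_exponent_ge hρ0 hρ1 hfloor
    _ = ρ⁻¹ * ρ ^ ((n : ℝ) / k) := by rw [Real.rpow_sub_one hρ0.ne', div_eq_inv_mul]
    _ = ρ⁻¹ * (ρ ^ (-(1 / (k : ℝ)))) ^ (-(n : ℝ)) := by
        rw [← Real.rpow_mul hρ0.le]
        congr 2
        ring

section Decay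

variable {μ : Measure (GLd d)} [IsProbabilityMeasure μ] {c α ρ : ℝ} [Nontrivial (Fin d)] {k : ℕ}

lemma ekalpha_mconvN_le_pow_mul (hc : 0 ≤ c) (hμ : ∀ᵐ g ∂μ, LogNormLE c g) (hα : 0 ≤ α)
    (hk : 0 < k) (hρ : 0 ≤ ρ) (hblock : ekalpha α (mconvN μ k) ≤ ENNReal.ofReal ρ) (n : ℕ) :
    ekalpha α (mconvN μ n) ≤
      ENNReal.ofReal (ρ ^ (n / k) * Real.exp (4 * (k * c) * α)) := by
  calc ekalpha α (mconvN μ n)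
      = ekalpha α ((mconvN μ (k * (n / k))).mconv (mconvN μ (n % k))) := by
        rw [← mconvN_add, Nat.div_add_mod]
    _ ≤ ekalpha α (mconvN μ k) ^ (n / k) *
          ENNReal.ofReal (Real.exp (4 * ((n % k : ℕ) * c) * α)) :=
        ekalpha_mconv_le.trans
          (mul_le_mul' (ekalpha_mconvN_mul_le k _) (ekalpha_mconvN_le_exp hμ hα _))
    _ ≤ ENNReal.ofReal ρ ^ (n / k) * ENNReal.ofReal (Real.exp (4 * (k * c) * α)) := by
        gcongr
        exact (Nat.mod_lt n hk).le
    _ = ENNReal.ofReal (ρ ^ (n / k) * Real.exp (4 * (k * c) * α)) := by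
        rw [ENNReal.ofReal_mul (by positivity), ENNReal.ofReal_pow hρ]

lemma kalpha_mconvN_le_of_ekalpha_le (hc : 0 ≤ c) (hμ : ∀ᵐ g ∂μ, LogNormLE c g) (hα : 0 ≤ α)
    (hk : 0 < k) (hρ0 : 0 < ρ) (hρ1 : ρ ≤ 1)
    (hblock : ekalpha α (mconvN μ k) ≤ ENNReal.ofReal ρ) (n : ℕ) :
    kalpha α (mconvN μ n) ≤
      Real.exp (4 * (k * c) * α) / ρ * (ρ ^ (-(1 / (k : ℝ)))) ^ (-(n : ℝ)) := by
  refine (kalpha_le (by positivity)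
    (ekalpha_mconvN_le_pow_mul hc hμ hα hk hρ0.le hblock n)).trans ?_
  calc ρ ^ (n / k) * Real.exp (4 * (k * c) * α)
      ≤ ρ⁻¹ * (ρ ^ (-(1 / (k : ℝ)))) ^ (-(n : ℝ)) * Real.exp (4 * (k * c) * α) := by
        gcongr
        exact pow_div_le_inv_mul_rpow hρ0 hρ1 k n
    _ = Real.exp (4 * (k * c) * α) / ρ * (ρ ^ (-(1 / (k : ℝ)))) ^ (-(n : ℝ)) := by ring

end Decay

theorem contraction_of_kalpha
    (d : ℕ) (hd : 2 ≤ d) (S : Set (GLd d)) (hS : IsCompact S)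
    (μ₀ : Measure (GLd d)) [IsProbabilityMeasure μ₀] (hμ₀S : μ₀ Sᶜ = 0)
    (hqi : QuasiIrreducible μ₀) (hgap : L2 μ₀ < L1 μ₀) :
    ∃ α : ℝ, 0 < α ∧ α ≤ 1 ∧ ∃ θ : ℝ, 1 < θ ∧ ∃ C : ℝ, 0 < C ∧ ∃ ε : ℝ, 0 < ε ∧
      ∀ (μ : Measure (GLd d)) [IsProbabilityMeasure μ], μ Sᶜ = 0 →
        tvDist μ μ₀ < ε → ∀ n : ℕ, 1 ≤ n →
          kalpha α (mconvN μ n) ≤ C * θ ^ (-(n : ℝ)) := by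
  have : Nontrivial (Fin d) := Fin.nontrivial_iff_two_le.2 hd
  obtain ⟨c, hc, hcS⟩ := exists_logNormLE_of_isCompact hS
  have hae (μ : Measure (GLd d)) (hμS : μ Sᶜ = 0) : ∀ᵐ g ∂μ, LogNormLE c g :=
    (show ∀ᵐ g ∂μ, g ∈ S from hμS).mono hcS
  obtain ⟨k, hk, α, hα0, hα1, ρ₀, hρ₀0, hρ₀1, hμ₀⟩ :=
    exists_ekalpha_mconvN_le_lt_one (hae μ₀ hμ₀S) hqi hgap
  obtain ⟨ρ, hρ₀ρ, hρ1⟩ := exists_between hρ₀1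
  have hρ0 : 0 < ρ := hρ₀0.trans hρ₀ρ
  obtain ⟨ε, hε, hblock⟩ :=
    exists_forall_ekalpha_mconvN_le_of_tvDist_lt c hα0.le hρ₀0.le hρ₀ρ hμ₀
  refine ⟨α, hα0, hα1, ρ ^ (-(1 / (k : ℝ))), ?_, Real.exp (4 * (k * c) * α) / ρ, by positivity,
    ε, hε, fun μ _ hμS htv n _ => ?_⟩
  · exact Real.one_lt_rpow_of_pos_of_lt_one_of_neg hρ0 hρ1 (neg_lt_zero.2 (by positivity))
  · exact kalpha_mconvN_le_of_ekalpha_le hc.le (hae μ hμS) hα0.le hk hρ0 hρ1.le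
      (hblock μ (hae μ hμS) htv) n

end
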